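/- arXiv:2010.01529 — 5 statements merged into one kernel-verified Lean document; each statement's English description precedes it below -/
import Mathlib

section
/- For every α with −1 < α < 1 and all y, z > 0 with y ≠ z: ∫_{S²×S²} |√(2y)ω − √(2z)ω_*|^{−(3+α)} dω dω_* = 4π² · [ (√y + √z)^{1+α} − |√y − √z|^{1+α} ] / [ 2^{(1+α)/2} (1+α) √(yz) · |y − z|^{1+α} ]. -/
/-!
For unit vectors `ω`, `ω'` at angle `θ` one has `‖a ω - b ω'‖² = a² + b² - 2ab cos θ`, so for fixed
`ω` the integrand depends on `θ` alone. The angle to a fixed axis is distributed on the unit sphere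
of a `d`-dimensional space with density `|S^(d-2)| sin^(d-2) θ`; for `d = 3` this is Archimedes'
hat-box theorem, and `sin θ (a² + b² - 2ab cos θ)^(p/2)` has an elementary antiderivative. The
result does not depend on `ω`, so the outer integral is multiplication by `4π`. With `a = √(2y)` and
`b = √(2z)`, the factorization `|y - z| = |√y - √z| (√y + √z)` gives the closed form.

The density is found by integrating `f (⟪u, x⟫ / ‖x‖) h(‖x‖)` over the whole space in two ways: in
spherical coordinates, and in cylindrical coordinates `x = z u + w`, `w ⊥ u`, followed by polar
coordinates in the half-plane of the pairs `(z, ‖w‖)`. The radial weight `h` then cancels.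
-/

open MeasureTheory Real
open scoped RealInnerProductSpace ENNReal

noncomputable section

abbrev E3 := EuclideanSpace ℝ (Fin 3)

/-- The surface measure on the unit sphere `S² ⊂ ℝ³` (total mass `4π`). -/
noncomputable def sphM : Measure (Metric.sphere (0 : E3) 1) :=
  (volume : Measure E3).toSphere

open Module (finrank)
open Metric (sphere)
open Set (Ioi Ioo)

theorem lintegral_lintegral_Ioi_eq_polar {F : ℝ × ℝ → ℝ≥0∞} (hF : Measurable F) :
    ∫⁻ z, ∫⁻ ρ in Ioi (0 : ℝ), F (z, ρ) =
      ∫⁻ r in Ioi (0 : ℝ), ∫⁻ θ in Ioo 0 π, ENNReal.ofReal r * F (r * cos θ, r * sin θ) := by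
  have hupper : ∀ p ∈ polarCoord.target,
      ENNReal.ofReal p.1 • (Set.univ ×ˢ Ioi (0 : ℝ)).indicator F (polarCoord.symm p) =
        (Ioi (0 : ℝ) ×ˢ Ioo 0 π).indicator
          (fun p => ENNReal.ofReal p.1 * F (p.1 * cos p.2, p.1 * sin p.2)) p := by
    rintro ⟨r, θ⟩ ⟨hr : 0 < r, hθ⟩
    have hsin : 0 < r * sin θ ↔ 0 < θ := by
      rw [mul_pos_iff_of_pos_left hr]
      refine ⟨fun h => ?_, fun h => sin_pos_of_pos_of_lt_pi h hθ.2⟩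
      by_contra! hθ₀
      exact h.not_ge (sin_nonpos_of_nonpos_of_neg_pi_le hθ₀ hθ.1.le)
    simp [Set.indicator_apply, hsin, hr, hθ.2]
  have hsub : Ioi (0 : ℝ) ×ˢ Ioo 0 π ⊆ polarCoord.target :=
    Set.prod_mono_right (Set.Ioo_subset_Ioo_left (neg_nonpos.2 pi_pos.le))
  calc
    ∫⁻ z, ∫⁻ ρ in Ioi (0 : ℝ), F (z, ρ) = ∫⁻ p in Set.univ ×ˢ Ioi (0 : ℝ), F p := by
      rw [Measure.volume_eq_prod, setLIntegral_prod _ hF.aemeasurable, setLIntegral_univ]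
    _ = ∫⁻ p in polarCoord.target,
          ENNReal.ofReal p.1 • (Set.univ ×ˢ Ioi (0 : ℝ)).indicator F (polarCoord.symm p) := by
      rw [lintegral_comp_polarCoord_symm,
        lintegral_indicator (MeasurableSet.univ.prod measurableSet_Ioi)]
    _ = ∫⁻ p in Ioi (0 : ℝ) ×ˢ Ioo 0 π,
          ENNReal.ofReal p.1 * F (p.1 * cos p.2, p.1 * sin p.2) := by
      rw [setLIntegral_congr_fun polarCoord.open_target.measurableSet hupper,
        setLIntegral_indicator (measurableSet_Ioi.prod measurableSet_Ioo),
        Set.inter_eq_left.2 hsub]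
    _ = _ := by
      rw [Measure.volume_eq_prod, setLIntegral_prod _ (by fun_prop)]

section PolarCoordinates

variable {E : Type*} [NormedAddCommGroup E] [NormedSpace ℝ E] [FiniteDimensional ℝ E]
  [MeasurableSpace E] [BorelSpace E] [Nontrivial E]

theorem lintegral_eq_lintegral_toSphere (μ : Measure E) [μ.IsAddHaarMeasure] {F : E → ℝ≥0∞}
    (hF : Measurable F) :
    ∫⁻ x, F x ∂μ =
      ∫⁻ ω : sphere (0 : E) 1, (∫⁻ r in Ioi (0 : ℝ),
        ENNReal.ofReal (r ^ (finrank ℝ E - 1)) * F (r • (ω : E))) ∂μ.toSphere := by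
  calc
    ∫⁻ x, F x ∂μ = ∫⁻ x : ({0}ᶜ : Set E), F x ∂(μ.comap (↑)) := by
      rw [lintegral_subtype_comap (measurableSet_singleton _).compl, restrict_compl_singleton]
    _ = ∫⁻ p, F ((p.2 : ℝ) • (p.1 : E))
          ∂(μ.toSphere.prod (Measure.volumeIoiPow (finrank ℝ E - 1))) := by
      rw [← μ.measurePreserving_homeomorphUnitSphereProd.lintegral_comp_emb
        (Homeomorph.measurableEmbedding _)]
      refine lintegral_congr fun x => ?_
      simp [smul_smul, mul_inv_cancel₀ (norm_ne_zero_iff.2 x.2)]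
    _ = ∫⁻ ω : sphere (0 : E) 1, ∫⁻ r : Ioi (0 : ℝ), F ((r : ℝ) • (ω : E))
          ∂(Measure.volumeIoiPow (finrank ℝ E - 1)) ∂μ.toSphere :=
      lintegral_prod _ (by fun_prop)
    _ = _ := by
      refine lintegral_congr fun ω => ?_
      rw [Measure.volumeIoiPow,
        lintegral_withDensity_eq_lintegral_mul _ (by fun_prop) (by fun_prop)]
      exact lintegral_subtype_comap measurableSet_Ioi
        fun r : ℝ => ENNReal.ofReal (r ^ (finrank ℝ E - 1)) * F (r • (ω : E))

theorem lintegral_fun_norm (μ : Measure E) [μ.IsAddHaarMeasure] {h : ℝ → ℝ≥0∞}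
    (hh : Measurable h) :
    ∫⁻ x, h ‖x‖ ∂μ =
      μ.toSphere Set.univ *
        ∫⁻ r in Ioi (0 : ℝ), ENNReal.ofReal (r ^ (finrank ℝ E - 1)) * h r := by
  have hray (ω : sphere (0 : E) 1) :
      ∫⁻ r in Ioi (0 : ℝ), ENNReal.ofReal (r ^ (finrank ℝ E - 1)) * h ‖r • (ω : E)‖ =
        ∫⁻ r in Ioi (0 : ℝ), ENNReal.ofReal (r ^ (finrank ℝ E - 1)) * h r :=
    setLIntegral_congr_fun measurableSet_Ioi fun r (hr : 0 < r) => by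
      simp [norm_smul, abs_of_pos hr]
  rw [lintegral_eq_lintegral_toSphere μ (by fun_prop)]
  simp_rw [hray]
  rw [lintegral_const, mul_comm]

end PolarCoordinates

section OrthogonalDecomposition

variable {E : Type*} [NormedAddCommGroup E] [InnerProductSpace ℝ E] {u : E}

theorem norm_smul_add_orthogonal (hu : ‖u‖ = 1) (z : ℝ) (w : (ℝ ∙ u)ᗮ) :
    ‖z • u + w‖ = √(z ^ 2 + ‖w‖ ^ 2) := by
  have horth : ⟪z • u, (w : E)⟫ = 0 := by
    rw [inner_smul_left, Submodule.mem_orthogonal_singleton_iff_inner_right.1 w.2, mul_zero]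
  rw [← Real.sqrt_sq (norm_nonneg (z • u + (w : E))), sq,
    norm_add_sq_eq_norm_sq_add_norm_sq_real horth]
  simp [norm_smul, hu, ← sq]

theorem inner_smul_add_orthogonal (hu : ‖u‖ = 1) (z : ℝ) (w : (ℝ ∙ u)ᗮ) :
    ⟪u, z • u + (w : E)⟫ = z := by
  simp [inner_add_right, inner_smul_right, hu,
    Submodule.mem_orthogonal_singleton_iff_inner_right.1 w.2]

end OrthogonalDecomposition

section HatBox

variable {E : Type*} [NormedAddCommGroup E] [InnerProductSpace ℝ E] [FiniteDimensional ℝ E]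
  [MeasurableSpace E] [BorelSpace E] {u : E}

theorem lintegral_eq_lintegral_smul_add_orthogonal (hu : ‖u‖ = 1) {F : E → ℝ≥0∞}
    (hF : Measurable F) :
    ∫⁻ x, F x = ∫⁻ z : ℝ, ∫⁻ w : (ℝ ∙ u)ᗮ, F (z • u + w) := by
  let e : WithLp 2 (ℝ × (ℝ ∙ u)ᗮ) ≃ₗᵢ[ℝ] E :=
    (LinearIsometryEquiv.withLpProdCongr 2 (LinearIsometryEquiv.toSpanUnitSingleton u hu)
      (.refl ℝ _)).trans (ℝ ∙ u).orthogonalDecomposition.symm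
  have he (p : ℝ × (ℝ ∙ u)ᗮ) : e (WithLp.toLp 2 p) = p.1 • u + p.2 := rfl
  calc
    ∫⁻ x, F x = ∫⁻ p : ℝ × (ℝ ∙ u)ᗮ, F (e (WithLp.toLp 2 p)) := by
      rw [← e.measurePreserving.lintegral_comp hF]
      exact ((WithLp.volume_preserving_toLp _ _).lintegral_comp
        (hF.comp e.continuous.measurable)).symm
    _ = _ := by
      simp_rw [he]
      exact lintegral_prod _ (by fun_prop)

theorem lintegral_inner_norm (hu : ‖u‖ = 1) (hE : 1 < finrank ℝ E) {G : ℝ × ℝ → ℝ≥0∞}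
    (hG : Measurable G) :
    ∫⁻ x : E, G (⟪u, x⟫, ‖x‖) =
      (volume : Measure (ℝ ∙ u)ᗮ).toSphere Set.univ *
        ∫⁻ r in Ioi (0 : ℝ), ∫⁻ θ in Ioo 0 π,
          ENNReal.ofReal r * (ENNReal.ofReal ((r * sin θ) ^ (finrank ℝ E - 2)) *
            G (r * cos θ, r)) := by
  have hdim : finrank ℝ (ℝ ∙ u)ᗮ = finrank ℝ E - 1 := by
    have := (ℝ ∙ u).finrank_add_finrank_orthogonal
    rw [finrank_span_singleton (norm_ne_zero_iff.1 (by simp [hu]))] at this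
    omega
  have : Nontrivial (ℝ ∙ u)ᗮ := Module.nontrivial_of_finrank_pos (R := ℝ) (by omega)
  calc
    ∫⁻ x : E, G (⟪u, x⟫, ‖x‖)
        = ∫⁻ z : ℝ, ∫⁻ w : (ℝ ∙ u)ᗮ, G (z, √(z ^ 2 + ‖w‖ ^ 2)) := by
      rw [lintegral_eq_lintegral_smul_add_orthogonal hu (by fun_prop)]
      simp_rw [inner_smul_add_orthogonal hu, norm_smul_add_orthogonal hu]
    _ = (volume : Measure (ℝ ∙ u)ᗮ).toSphere Set.univ *
          ∫⁻ z : ℝ, ∫⁻ ρ in Ioi (0 : ℝ),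
            ENNReal.ofReal (ρ ^ (finrank ℝ E - 2)) * G (z, √(z ^ 2 + ρ ^ 2)) := by
      rw [← lintegral_const_mul' _ _ (measure_ne_top _ _)]
      refine lintegral_congr fun z => ?_
      rw [lintegral_fun_norm volume (h := fun ρ => G (z, √(z ^ 2 + ρ ^ 2))) (by fun_prop), hdim,
        Nat.sub_sub]
    _ = _ := by
      rw [lintegral_lintegral_Ioi_eq_polar
        (F := fun p => ENNReal.ofReal (p.2 ^ (finrank ℝ E - 2)) * G (p.1, √(p.1 ^ 2 + p.2 ^ 2)))
        (by fun_prop)]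
      congr 1
      refine setLIntegral_congr_fun measurableSet_Ioi fun r (hr : 0 < r) => ?_
      have hnorm (θ : ℝ) : √((r * cos θ) ^ 2 + (r * sin θ) ^ 2) = r := by
        rw [mul_pow, mul_pow, ← mul_add, cos_sq_add_sin_sq, mul_one, Real.sqrt_sq hr.le]
      simp_rw [hnorm]

theorem lintegral_toSphere_inner_mul (hu : ‖u‖ = 1) (hE : 1 < finrank ℝ E) {f h : ℝ → ℝ≥0∞}
    (hf : Measurable f) (hh : Measurable h) :
    (∫⁻ ω : sphere (0 : E) 1, f ⟪u, (ω : E)⟫ ∂(volume : Measure E).toSphere) *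
        ∫⁻ r in Ioi (0 : ℝ), ENNReal.ofReal (r ^ (finrank ℝ E - 1)) * h r =
      (volume : Measure (ℝ ∙ u)ᗮ).toSphere Set.univ *
        (∫⁻ θ in Ioo 0 π, ENNReal.ofReal (sin θ ^ (finrank ℝ E - 2)) * f (cos θ)) *
          ∫⁻ r in Ioi (0 : ℝ), ENNReal.ofReal (r ^ (finrank ℝ E - 1)) * h r := by
  have : Nontrivial E := Module.nontrivial_of_finrank_pos (R := ℝ) (by omega)
  have hspherical : ∫⁻ x : E, f (⟪u, x⟫ / ‖x‖) * h ‖x‖ =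
      (∫⁻ ω : sphere (0 : E) 1, f ⟪u, (ω : E)⟫ ∂(volume : Measure E).toSphere) *
        ∫⁻ r in Ioi (0 : ℝ), ENNReal.ofReal (r ^ (finrank ℝ E - 1)) * h r := by
    rw [lintegral_eq_lintegral_toSphere volume (by fun_prop),
      ← lintegral_mul_const _ (by fun_prop)]
    refine lintegral_congr fun ω => ?_
    rw [← lintegral_const_mul _ (by fun_prop)]
    refine setLIntegral_congr_fun measurableSet_Ioi fun r (hr : 0 < r) => ?_
    simp only [inner_smul_right, norm_smul, Real.norm_of_nonneg hr.le, norm_eq_of_mem_sphere,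
      mul_one, mul_div_cancel_left₀ _ hr.ne']
    ring
  have hcylindrical : ∫⁻ x : E, f (⟪u, x⟫ / ‖x‖) * h ‖x‖ =
      (volume : Measure (ℝ ∙ u)ᗮ).toSphere Set.univ *
        ((∫⁻ θ in Ioo 0 π, ENNReal.ofReal (sin θ ^ (finrank ℝ E - 2)) * f (cos θ)) *
          ∫⁻ r in Ioi (0 : ℝ), ENNReal.ofReal (r ^ (finrank ℝ E - 1)) * h r) := by
    rw [lintegral_inner_norm hu hE (G := fun p => f (p.1 / p.2) * h p.2) (by fun_prop),
      ← lintegral_const_mul (∫⁻ θ in Ioo 0 π, _) (by fun_prop)]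
    congr 1
    refine setLIntegral_congr_fun measurableSet_Ioi fun r (hr : 0 < r) => ?_
    rw [← lintegral_mul_const _ (by fun_prop)]
    refine setLIntegral_congr_fun measurableSet_Ioo fun θ _ => ?_
    have hpow : ENNReal.ofReal r * ENNReal.ofReal ((r * sin θ) ^ (finrank ℝ E - 2)) =
        ENNReal.ofReal (sin θ ^ (finrank ℝ E - 2)) *
          ENNReal.ofReal (r ^ (finrank ℝ E - 1)) := by
      rw [← ENNReal.ofReal_mul hr.le, ← ENNReal.ofReal_mul' (by positivity), mul_pow,
        ← mul_assoc, ← pow_succ', mul_comm, show finrank ℝ E - 2 + 1 = finrank ℝ E - 1 by omega]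
    simp only [mul_div_cancel_left₀ _ hr.ne', ← mul_assoc, hpow]
    ring
  rw [← hspherical, hcylindrical, mul_assoc]

theorem exists_measurable_lintegral_pow_mul_eq_one (n : ℕ) :
    ∃ h : ℝ → ℝ≥0∞, Measurable h ∧
      ∫⁻ r in Ioi (0 : ℝ), ENNReal.ofReal (r ^ n) * h r = 1 := by
  refine ⟨(Ioo (0 : ℝ) 1).indicator fun r => (ENNReal.ofReal (r ^ n))⁻¹,
    Measurable.indicator (by fun_prop) measurableSet_Ioo, ?_⟩
  have hcancel (r : ℝ) : ENNReal.ofReal (r ^ n) *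
      (Ioo (0 : ℝ) 1).indicator (fun r => (ENNReal.ofReal (r ^ n))⁻¹) r =
        (Ioo (0 : ℝ) 1).indicator 1 r := by
    by_cases hr : r ∈ Ioo (0 : ℝ) 1
    · rw [Set.indicator_of_mem hr, Set.indicator_of_mem hr, Pi.one_apply,
        ENNReal.mul_inv_cancel (ENNReal.ofReal_pos.2 (pow_pos hr.1 n)).ne' ENNReal.ofReal_ne_top]
    · rw [Set.indicator_of_notMem hr, Set.indicator_of_notMem hr, mul_zero]
  simp_rw [hcancel]
  rw [lintegral_indicator_one measurableSet_Ioo, Measure.restrict_apply measurableSet_Ioo,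
    Set.inter_eq_left.2 Set.Ioo_subset_Ioi_self]
  simp

theorem lintegral_toSphere_inner (hu : ‖u‖ = 1) (hE : 1 < finrank ℝ E) {f : ℝ → ℝ≥0∞}
    (hf : Measurable f) :
    ∫⁻ ω : sphere (0 : E) 1, f ⟪u, (ω : E)⟫ ∂(volume : Measure E).toSphere =
      (volume : Measure (ℝ ∙ u)ᗮ).toSphere Set.univ *
        ∫⁻ θ in Ioo 0 π, ENNReal.ofReal (sin θ ^ (finrank ℝ E - 2)) * f (cos θ) := by
  obtain ⟨h, hh, hone⟩ := exists_measurable_lintegral_pow_mul_eq_one (finrank ℝ E - 1)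
  simpa only [hone, mul_one] using lintegral_toSphere_inner_mul hu hE hf hh

end HatBox

theorem toSphere_univ_of_finrank_eq_two {E : Type*} [NormedAddCommGroup E]
    [InnerProductSpace ℝ E] [FiniteDimensional ℝ E] [MeasurableSpace E] [BorelSpace E]
    (hE : finrank ℝ E = 2) :
    (volume : Measure E).toSphere Set.univ = ENNReal.ofReal (2 * π) := by
  have : Nontrivial E := Module.nontrivial_of_finrank_pos (R := ℝ) (by omega)
  rw [Measure.toSphere_apply_univ, InnerProductSpace.volume_ball_of_dim_even (k := 1) hE, hE,
    ENNReal.ofReal_mul zero_le_two]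
  simp

theorem toSphere_univ_of_finrank_eq_three {E : Type*} [NormedAddCommGroup E]
    [InnerProductSpace ℝ E] [FiniteDimensional ℝ E] [MeasurableSpace E] [BorelSpace E]
    (hE : finrank ℝ E = 3) :
    (volume : Measure E).toSphere Set.univ = ENNReal.ofReal (4 * π) := by
  rw [Measure.toSphere_apply_univ, InnerProductSpace.volume_ball_of_dim_odd (k := 1) hE, hE,
    ← ENNReal.ofReal_natCast, ENNReal.ofReal_one, one_pow, one_mul,
    ← ENNReal.ofReal_mul (by positivity)]
  congr 1
  norm_num [Nat.doubleFactorial]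
  ring

section ChordLength

theorem norm_smul_sub_smul_rpow {E : Type*} [NormedAddCommGroup E] [InnerProductSpace ℝ E]
    {u v : E} (hu : ‖u‖ = 1) (hv : ‖v‖ = 1) (a b p : ℝ) :
    ‖a • u - b • v‖ ^ p = (a ^ 2 + b ^ 2 - 2 * a * b * ⟪u, v⟫) ^ (p / 2) := by
  have hsq : a ^ 2 + b ^ 2 - 2 * a * b * ⟪u, v⟫ = ‖a • u - b • v‖ ^ (2 : ℝ) := by
    rw [Real.rpow_two, norm_sub_sq_real, norm_smul, norm_smul, hu, hv, real_inner_smul_left,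
      real_inner_smul_right, mul_one, mul_one, Real.norm_eq_abs, Real.norm_eq_abs, sq_abs, sq_abs]
    ring
  rw [hsq, ← Real.rpow_mul (norm_nonneg _), mul_div_cancel₀ _ two_ne_zero]

variable {a b : ℝ}

theorem sq_add_sq_sub_two_mul_mul_cos_pos (ha : 0 < a) (hb : 0 < b) (hab : a ≠ b) (θ : ℝ) :
    0 < a ^ 2 + b ^ 2 - 2 * a * b * cos θ := by
  have hdiff : 0 < (a - b) ^ 2 := sq_pos_of_ne_zero (sub_ne_zero.2 hab)
  nlinarith [mul_nonneg (mul_pos ha hb).le (sub_nonneg.2 (cos_le_one θ))]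

theorem hasDerivAt_chord_rpow (ha : 0 < a) (hb : 0 < b) (hab : a ≠ b) {p : ℝ} (hp : p ≠ -2)
    (θ : ℝ) :
    HasDerivAt
      (fun θ => (a ^ 2 + b ^ 2 - 2 * a * b * cos θ) ^ ((p + 2) / 2) / (a * b * (p + 2)))
      (sin θ * (a ^ 2 + b ^ 2 - 2 * a * b * cos θ) ^ (p / 2)) θ := by
  have hp' : p + 2 ≠ 0 := fun h => hp (eq_neg_of_add_eq_zero_left h)
  have hbase : HasDerivAt (fun θ => a ^ 2 + b ^ 2 - 2 * a * b * cos θ) (2 * a * b * sin θ) θ := by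
    simpa using ((hasDerivAt_cos θ).const_mul (2 * a * b)).const_sub (a ^ 2 + b ^ 2)
  refine ((hbase.rpow_const (p := (p + 2) / 2)
    (Or.inl (sq_add_sq_sub_two_mul_mul_cos_pos ha hb hab θ).ne')).div_const
      (a * b * (p + 2))).congr_deriv ?_
  rw [show (p + 2) / 2 - 1 = p / 2 by ring]
  field_simp

theorem continuous_sin_mul_chord_rpow (ha : 0 < a) (hb : 0 < b) (hab : a ≠ b) (p : ℝ) :
    Continuous fun θ => sin θ * (a ^ 2 + b ^ 2 - 2 * a * b * cos θ) ^ (p / 2) :=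
  continuous_sin.mul <| Continuous.rpow_const (by fun_prop) fun θ =>
    Or.inl (sq_add_sq_sub_two_mul_mul_cos_pos ha hb hab θ).ne'

theorem integral_sin_mul_chord_rpow (ha : 0 < a) (hb : 0 < b) (hab : a ≠ b) {p : ℝ}
    (hp : p ≠ -2) :
    ∫ θ in 0..π, sin θ * (a ^ 2 + b ^ 2 - 2 * a * b * cos θ) ^ (p / 2) =
      ((a + b) ^ (p + 2) - |a - b| ^ (p + 2)) / (a * b * (p + 2)) := by
  have hfar : a ^ 2 + b ^ 2 - 2 * a * b * cos π = (a + b) ^ (2 : ℝ) := by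
    rw [cos_pi, Real.rpow_two]; ring
  have hnear : a ^ 2 + b ^ 2 - 2 * a * b * cos 0 = |a - b| ^ (2 : ℝ) := by
    rw [cos_zero, Real.rpow_two, sq_abs]; ring
  rw [intervalIntegral.integral_eq_sub_of_hasDerivAt
      (fun θ _ => hasDerivAt_chord_rpow ha hb hab hp θ)
      ((continuous_sin_mul_chord_rpow ha hb hab p).intervalIntegrable _ _),
    hfar, hnear, ← Real.rpow_mul (by positivity), ← Real.rpow_mul (abs_nonneg _),
    mul_div_cancel₀ _ two_ne_zero, sub_div]

theorem lintegral_sin_mul_chord_rpow (ha : 0 < a) (hb : 0 < b) (hab : a ≠ b) {p : ℝ}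
    (hp : p ≠ -2) :
    ∫⁻ θ in Ioo 0 π, ENNReal.ofReal (sin θ) *
        ENNReal.ofReal ((a ^ 2 + b ^ 2 - 2 * a * b * cos θ) ^ (p / 2)) =
      ENNReal.ofReal (((a + b) ^ (p + 2) - |a - b| ^ (p + 2)) / (a * b * (p + 2))) := by
  rw [← integral_sin_mul_chord_rpow ha hb hab hp, intervalIntegral.integral_of_le pi_pos.le,
    integral_Ioc_eq_integral_Ioo, ofReal_integral_eq_lintegral_ofReal]
  · refine setLIntegral_congr_fun measurableSet_Ioo fun θ hθ => ?_
    exact (ENNReal.ofReal_mul (sin_pos_of_mem_Ioo hθ).le).symm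
  · exact (continuous_sin_mul_chord_rpow ha hb hab p).integrableOn_Icc.mono_set
      Set.Ioo_subset_Icc_self
  · filter_upwards [ae_restrict_mem measurableSet_Ioo] with θ hθ
    have := sin_pos_of_mem_Ioo hθ
    have := sq_add_sq_sub_two_mul_mul_cos_pos ha hb hab θ
    simp only [Pi.zero_apply]
    positivity

end ChordLength

section DoubleSphere

variable {E : Type*} [NormedAddCommGroup E] [InnerProductSpace ℝ E] [FiniteDimensional ℝ E]
  [MeasurableSpace E] [BorelSpace E] {a b p : ℝ}

theorem lintegral_toSphere_norm_smul_sub_smul_rpow (hE : finrank ℝ E = 3) (ha : 0 < a)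
    (hb : 0 < b) (hab : a ≠ b) (hp : p ≠ -2) {u : E} (hu : ‖u‖ = 1) :
    ∫⁻ ω : sphere (0 : E) 1, ENNReal.ofReal (‖a • u - b • (ω : E)‖ ^ p)
        ∂(volume : Measure E).toSphere =
      ENNReal.ofReal
        (2 * π * (((a + b) ^ (p + 2) - |a - b| ^ (p + 2)) / (a * b * (p + 2)))) := by
  have : Fact (finrank ℝ E = 2 + 1) := ⟨hE⟩
  have hplane : finrank ℝ (ℝ ∙ u)ᗮ = 2 :=
    Submodule.finrank_orthogonal_span_singleton (norm_ne_zero_iff.1 (by simp [hu]))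
  simp_rw [norm_smul_sub_smul_rpow hu (norm_eq_of_mem_sphere _)]
  rw [lintegral_toSphere_inner hu (by omega)
      (f := fun t => ENNReal.ofReal ((a ^ 2 + b ^ 2 - 2 * a * b * t) ^ (p / 2))) (by fun_prop),
    toSphere_univ_of_finrank_eq_two hplane, hE]
  simp only [Nat.reduceSub, pow_one]
  rw [lintegral_sin_mul_chord_rpow ha hb hab hp, ← ENNReal.ofReal_mul (by positivity)]

theorem lintegral_lintegral_toSphere_norm_smul_sub_smul_rpow (hE : finrank ℝ E = 3) (ha : 0 < a)
    (hb : 0 < b) (hab : a ≠ b) (hp : p ≠ -2) :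
    ∫⁻ ω : sphere (0 : E) 1, (∫⁻ ω' : sphere (0 : E) 1,
        ENNReal.ofReal (‖a • (ω : E) - b • (ω' : E)‖ ^ p) ∂(volume : Measure E).toSphere)
        ∂(volume : Measure E).toSphere =
      ENNReal.ofReal
        (8 * π ^ 2 * (((a + b) ^ (p + 2) - |a - b| ^ (p + 2)) / (a * b * (p + 2)))) := by
  simp_rw [lintegral_toSphere_norm_smul_sub_smul_rpow hE ha hb hab hp (norm_eq_of_mem_sphere _)]
  rw [lintegral_const, toSphere_univ_of_finrank_eq_three hE,
    ← ENNReal.ofReal_mul' (by positivity)]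
  ring_nf

end DoubleSphere

theorem rpow_neg_sub_rpow_neg_div_sqrt_two_mul {y z : ℝ} (hy : 0 < y) (hz : 0 < z) (hyz : y ≠ z)
    (s : ℝ) :
    ((√(2 * y) + √(2 * z)) ^ (-s) - |√(2 * y) - √(2 * z)| ^ (-s)) /
        (√(2 * y) * √(2 * z) * -s) =
      ((√y + √z) ^ s - |√y - √z| ^ s) /
        (2 * ((2 : ℝ) ^ (s / 2) * s * √(y * z) * |y - z| ^ s)) := by
  have hsub : 0 < |√y - √z| := by
    rw [abs_pos, sub_ne_zero]
    exact fun h => hyz ((Real.sqrt_inj hy.le hz.le).1 h)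
  have hfactor : |y - z| = |√y - √z| * (√y + √z) := by
    rw [← abs_of_pos (by positivity : 0 < √y + √z), ← abs_mul]
    congr 1
    linear_combination -Real.sq_sqrt hy.le + Real.sq_sqrt hz.le
  have htwo : (2 : ℝ) ^ (s / 2) = √2 ^ s := by
    rw [Real.sqrt_eq_rpow, ← Real.rpow_mul zero_le_two]
    ring_nf
  have hmul : √2 * √y * (√2 * √z) = 2 * (√y * √z) := by
    linear_combination (√y * √z) * Real.mul_self_sqrt (zero_le_two (α := ℝ))
  rw [Real.sqrt_mul zero_le_two, Real.sqrt_mul zero_le_two, Real.sqrt_mul hy.le, hmul,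
    ← mul_add, ← mul_sub, abs_mul, abs_of_pos (by positivity : 0 < √2), hfactor, htwo,
    Real.rpow_neg (by positivity), Real.rpow_neg (by positivity),
    Real.mul_rpow (by positivity) (by positivity), Real.mul_rpow (by positivity) hsub.le,
    Real.mul_rpow hsub.le (by positivity)]
  have : 0 < |√y - √z| ^ s := by positivity
  rcases eq_or_ne s 0 with rfl | hs
  · simp
  field_simp
  ring

theorem stmt9_general {α : ℝ} (hα : α ≠ -1) {y z : ℝ} (hy : 0 < y) (hz : 0 < z) (hyz : y ≠ z) :
    (∫⁻ ω : Metric.sphere (0 : E3) 1, ∫⁻ ω' : Metric.sphere (0 : E3) 1,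
        ENNReal.ofReal
          (‖Real.sqrt (2 * y) • (ω : E3) - Real.sqrt (2 * z) • (ω' : E3)‖ ^ (-((3 : ℝ) + α)))
      ∂sphM ∂sphM) =
    ENNReal.ofReal (4 * π ^ 2 *
      (((Real.sqrt y + Real.sqrt z) ^ ((1 : ℝ) + α) -
          |Real.sqrt y - Real.sqrt z| ^ ((1 : ℝ) + α)) /
        ((2 : ℝ) ^ (((1 : ℝ) + α) / 2) * (1 + α) * Real.sqrt (y * z) *
          |y - z| ^ ((1 : ℝ) + α)))) := by
  have hne : √(2 * y) ≠ √(2 * z) := fun h =>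
    hyz (mul_left_cancel₀ two_ne_zero ((Real.sqrt_inj (by positivity) (by positivity)).1 h))
  have hexp : -(3 + α) ≠ -2 := fun h => hα (by linarith)
  unfold sphM
  rw [lintegral_lintegral_toSphere_norm_smul_sub_smul_rpow (by simp) (by positivity)
      (by positivity) hne hexp, show -(3 + α) + 2 = -(1 + α) by ring,
    rpow_neg_sub_rpow_neg_div_sqrt_two_mul hy hz hyz, ← div_div _ (2 : ℝ)]
  ring_nf

/-- For every `−1 < α < 1` and all `y, z > 0` with `y ≠ z`,
`∫_{S²×S²} |√(2y)ω − √(2z)ω_*|^{−(3+α)} dω dω_*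
  = 4π² [(√y+√z)^{1+α} − |√y−√z|^{1+α}] / [2^{(1+α)/2}(1+α)√(yz)|y−z|^{1+α}]`. -/
theorem stmt9 (α : ℝ) (hα₁ : -1 < α) (hα₂ : α < 1)
    (y z : ℝ) (hy : 0 < y) (hz : 0 < z) (hyz : y ≠ z) :
    (∫⁻ ω : Metric.sphere (0 : E3) 1, ∫⁻ ω' : Metric.sphere (0 : E3) 1,
        ENNReal.ofReal
          (‖Real.sqrt (2 * y) • (ω : E3) - Real.sqrt (2 * z) • (ω' : E3)‖ ^ (-((3 : ℝ) + α)))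
      ∂sphM ∂sphM) =
    ENNReal.ofReal (4 * π ^ 2 *
      (((Real.sqrt y + Real.sqrt z) ^ ((1 : ℝ) + α) -
          |Real.sqrt y - Real.sqrt z| ^ ((1 : ℝ) + α)) /
        ((2 : ℝ) ^ (((1 : ℝ) + α) / 2) * (1 + α) * Real.sqrt (y * z) *
          |y - z| ^ ((1 : ℝ) + α)))) :=
  stmt9_general hα₁.ne' hy hz hyz

end
end

section
/- Let {F_t}_{t≥0} be a family of finite positive Borel measures on [0,∞) satisfying sup_{t≥0} ∫_{[0,∞)} (1+x) dF_t(x) < ∞, and suppose that for every φ ∈ C²_c([0,∞)) and every t ≥ 0, ∫_{[0,∞)} φ dF_t = ∫_{[0,∞)} φ dF₀ + ∫₀^t ( ∫_{[0,∞)²} L[φ](x,y) dF_s(x) dF_s(y) ) ds. Then: (i) F_t conserves mass and energy, i.e. ∫_{[0,∞)} dF_t = ∫_{[0,∞)} dF₀ and ∫_{[0,∞)} x dF_t(x) = ∫_{[0,∞)} x dF₀(x) for all t ≥ 0; and (ii) for every φ ∈ C²_c([0,∞)), the function t ↦ ∫_{[0,∞)} φ dF_t is continuously differentiable on [0,∞)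 with derivative (d/dt) ∫_{[0,∞)} φ dF_t = ∫_{[0,∞)²} L[φ](x,y) dF_t(x) dF_t(y) for all t ≥ 0. -/
/-!
The kernel satisfies `|L[φ](x,y)| ≤ C₀ ‖φ''‖_∞ √(max x y)` and, for `φ ∈ C²_c`, is bounded and
continuous on `[0,∞)²`. Hence the collision form `Q_φ(μ) = ∫∫ L[φ] dμ dμ` is at most a constant
times `‖φ''‖_∞` along a weak solution.

*Conservation.* The functions `φ_c(x) = x ^ k χ(c x)`, with `χ` a cutoff at the origin and
`k = 0, 1`, have `‖φ_c''‖_∞ = O(c ^ (2 - k))`, so their collision terms vanish as `c → 0`, while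
`∫ φ_c dF_t → ∫ x ^ k dF_t` by dominated convergence.

*Differentiability.* By the fundamental theorem of calculus it is enough that `t ↦ Q_φ(F_t)` be
continuous. Integrability of `s ↦ Q_φ(F_s)` is not assumed, but the primitive `t ↦ ∫₀ᵗ g` of an
arbitrary `g` is Borel measurable: it is continuous on the interval where `g` is integrable and `0`
elsewhere. So `t ↦ ∫ φ dF_t` is measurable for `φ ∈ C²_c`, hence `t ↦ F_t` is a measurable family,
and `s ↦ Q_φ(F_s)` is measurable and bounded after all. Therefore `t ↦ ∫ φ dF_t` is continuous for
`φ ∈ C²_c`. Together with conservation of mass, the portmanteau theorem upgrades this to weak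
continuity of `t ↦ F_t`, then of `t ↦ F_t ⊗ F_t`, and `Q_φ(F_t)` is the integral of a bounded
continuous function against the latter.
-/

open MeasureTheory Real Filter
open scoped Topology ENNReal

noncomputable section

/-- The isotropic Landau kernel
`L[φ](x,y) = (4π/√(max x y)) ((2/3)(φ''(x)+φ''(y)) min x y − (φ'(x)−φ'(y)) sgn(x−y))`,
with `L[φ](0,0) = 0` (via the convention `r/0 = 0`). -/
noncomputable def Liso (φ : ℝ → ℝ) (x y : ℝ) : ℝ :=
  (4 * π / Real.sqrt (max x y)) *
    ((2 / 3) * (deriv (deriv φ) x + deriv (deriv φ) y) * min x y -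
      (deriv φ x - deriv φ y) * Real.sign (x - y))

open scoped NNReal ContDiff BoundedContinuousFunction

/-! ### The kernel -/

section Kernel

/-- The second factor of the Landau kernel, made manifestly symmetric: ordering the arguments of
`φ'` by `max` and `min` absorbs the sign. -/
def landauBracket (φ : ℝ → ℝ) (x y : ℝ) : ℝ :=
  2 / 3 * (deriv (deriv φ) x + deriv (deriv φ) y) * min x y -
    (deriv φ (max x y) - deriv φ (min x y))

variable {φ : ℝ → ℝ} {M x y : ℝ}

lemma Liso_eq_mul_landauBracket (φ : ℝ → ℝ) (x y : ℝ) :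
    Liso φ x y = 4 * π / √(max x y) * landauBracket φ x y := by
  unfold Liso landauBracket
  rcases lt_trichotomy x y with h | rfl | h
  · rw [max_eq_right h.le, min_eq_left h.le, Real.sign_of_neg (sub_neg.2 h)]; ring
  · simp
  · rw [max_eq_left h.le, min_eq_right h.le, Real.sign_of_pos (sub_pos.2 h)]; ring

lemma abs_landauBracket_le (hd : Differentiable ℝ (deriv φ))
    (hM : ∀ z, |deriv (deriv φ) z| ≤ M) (hx : 0 ≤ x) (hy : 0 ≤ y) :
    |landauBracket φ x y| ≤ 4 / 3 * M * max x y := by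
  have hmin : 0 ≤ min x y := le_min hx hy
  have hle : min x y ≤ max x y := min_le_max
  have hM₀ : 0 ≤ M := (abs_nonneg _).trans (hM 0)
  have hdiff : |deriv φ (max x y) - deriv φ (min x y)| ≤ M * (max x y - min x y) := by
    have h := Convex.norm_image_sub_le_of_norm_deriv_le (fun z _ => hd z) (fun z _ => hM z)
      convex_univ (Set.mem_univ (min x y)) (Set.mem_univ (max x y))
    rwa [Real.norm_eq_abs, Real.norm_eq_abs, abs_of_nonneg (sub_nonneg.2 hle)] at h
  have hsum : |deriv (deriv φ) x + deriv (deriv φ) y| ≤ 2 * M :=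
    (abs_add_le _ _).trans (by linarith [hM x, hM y])
  calc |landauBracket φ x y|
      ≤ 2 / 3 * |deriv (deriv φ) x + deriv (deriv φ) y| * min x y +
          |deriv φ (max x y) - deriv φ (min x y)| := by
        refine (abs_sub _ _).trans_eq ?_
        rw [abs_mul, abs_mul, abs_of_nonneg hmin, abs_of_pos (by norm_num : (0 : ℝ) < 2 / 3)]
    _ ≤ 2 / 3 * (2 * M) * min x y + M * (max x y - min x y) := by gcongr
    _ ≤ 4 / 3 * M * max x y := by nlinarith [mul_le_mul_of_nonneg_left hle hM₀]

lemma abs_Liso_le (hd : Differentiable ℝ (deriv φ)) (hM : ∀ z, |deriv (deriv φ) z| ≤ M)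
    (hx : 0 ≤ x) (hy : 0 ≤ y) : |Liso φ x y| ≤ 16 * π / 3 * M * √(max x y) := by
  rw [Liso_eq_mul_landauBracket, abs_mul, abs_of_nonneg (by positivity)]
  calc 4 * π / √(max x y) * |landauBracket φ x y|
      ≤ 4 * π / √(max x y) * (4 / 3 * M * max x y) := by
        gcongr; exact abs_landauBracket_le hd hM hx hy
    _ = 16 * π / 3 * M * (max x y / √(max x y)) := by ring
    _ = 16 * π / 3 * M * √(max x y) := by rw [Real.div_sqrt]

lemma exists_abs_landauBracket_le (hφ : ContDiff ℝ 2 φ) (hs : HasCompactSupport φ) :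
    ∃ A, ∀ x y, 0 ≤ x → 0 ≤ y → |landauBracket φ x y| ≤ A := by
  have h₁ : Continuous (deriv φ) := hφ.differentiable_deriv_two.continuous
  have h₂ : Continuous (deriv (deriv φ)) := hφ.deriv'.continuous_deriv_one
  obtain ⟨M₁, hM₁⟩ := hs.deriv.exists_bound_of_continuous h₁
  obtain ⟨M₂, hM₂⟩ := (hs.deriv.deriv.mul_right (f' := id)).exists_bound_of_continuous
    (h₂.mul continuous_id)
  have hmul : ∀ z w, 0 ≤ w → w ≤ z → |deriv (deriv φ) z * w| ≤ M₂ := fun z w hw hwz => by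
    refine le_trans ?_ (hM₂ z)
    rw [Pi.mul_apply, norm_mul, abs_mul, abs_of_nonneg hw, id, Real.norm_of_nonneg (hw.trans hwz),
      Real.norm_eq_abs]
    gcongr
  refine ⟨2 / 3 * (M₂ + M₂) + (M₁ + M₁), fun x y hx hy => ?_⟩
  have hmin : 0 ≤ min x y := le_min hx hy
  calc |landauBracket φ x y|
      = |2 / 3 * (deriv (deriv φ) x * min x y + deriv (deriv φ) y * min x y) -
          (deriv φ (max x y) - deriv φ (min x y))| := by
        rw [landauBracket]; ring_nf
    _ ≤ 2 / 3 * (|deriv (deriv φ) x * min x y| + |deriv (deriv φ) y * min x y|) +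
          (|deriv φ (max x y)| + |deriv φ (min x y)|) := by
        refine (abs_sub _ _).trans (add_le_add ?_ (abs_sub _ _))
        rw [abs_mul, abs_of_pos (by norm_num : (0 : ℝ) < 2 / 3)]
        gcongr
        exact abs_add_le _ _
    _ ≤ 2 / 3 * (M₂ + M₂) + (M₁ + M₁) := by
        gcongr
        exacts [hmul _ _ hmin (min_le_left x y), hmul _ _ hmin (min_le_right x y), hM₁ _, hM₁ _]

lemma exists_abs_Liso_le (hφ : ContDiff ℝ 2 φ) (hs : HasCompactSupport φ) :
    ∃ B, ∀ x y, 0 ≤ x → 0 ≤ y → |Liso φ x y| ≤ B := by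
  obtain ⟨M, hM⟩ := hs.deriv.deriv.exists_bound_of_continuous hφ.deriv'.continuous_deriv_one
  obtain ⟨A, hA⟩ := exists_abs_landauBracket_le hφ hs
  have hM₀ : 0 ≤ M := (norm_nonneg _).trans (hM 0)
  refine ⟨max (16 * π / 3 * M) (4 * π * A), fun x y hx hy => ?_⟩
  rcases le_total (max x y) 1 with h | h
  · refine (abs_Liso_le hφ.differentiable_deriv_two hM hx hy).trans (le_max_of_le_left ?_)
    exact mul_le_of_le_one_right (by positivity) (Real.sqrt_le_one.2 h)
  · rw [Liso_eq_mul_landauBracket, abs_mul, abs_of_nonneg (by positivity)]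
    refine le_max_of_le_right (mul_le_mul ?_ (hA x y hx hy) (abs_nonneg _) (by positivity))
    exact div_le_self (by positivity) (Real.one_le_sqrt.2 h)

lemma continuous_landauBracket (hφ : ContDiff ℝ 2 φ) :
    Continuous fun p : ℝ × ℝ => landauBracket φ p.1 p.2 := by
  have h₁ : Continuous (deriv φ) := hφ.differentiable_deriv_two.continuous
  have h₂ : Continuous (deriv (deriv φ)) := hφ.deriv'.continuous_deriv_one
  exact ((continuous_const.mul ((h₂.comp continuous_fst).add (h₂.comp continuous_snd))).mul
    (continuous_fst.min continuous_snd)).sub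
      ((h₁.comp (continuous_fst.max continuous_snd)).sub
        (h₁.comp (continuous_fst.min continuous_snd)))

lemma continuousOn_uncurry_Liso (hφ : ContDiff ℝ 2 φ) (hM : ∀ z, |deriv (deriv φ) z| ≤ M) :
    ContinuousOn (Function.uncurry (Liso φ)) (Set.Ici 0 ×ˢ Set.Ici 0) := by
  rintro ⟨x, y⟩ ⟨hx, -⟩
  rcases (le_max_of_le_left hx : 0 ≤ max x y).eq_or_lt with h | h
  · have h_zero : Liso φ x y = 0 := by simp [Liso_eq_mul_landauBracket, ← h]
    have h_lim : Tendsto (fun p : ℝ × ℝ => 16 * π / 3 * M * √(max p.1 p.2)) (𝓝 (x, y)) (𝓝 0) :=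
      (by fun_prop : Continuous fun p : ℝ × ℝ => 16 * π / 3 * M * √(max p.1 p.2)).tendsto'
        _ _ (by simp [← h])
    rw [ContinuousWithinAt, Function.uncurry_apply_pair, h_zero]
    refine squeeze_zero_norm' ?_ (h_lim.mono_left nhdsWithin_le_nhds)
    filter_upwards [self_mem_nhdsWithin] with p hp
    exact abs_Liso_le hφ.differentiable_deriv_two hM hp.1 hp.2
  · have h_eq : Function.uncurry (Liso φ) =
        fun p => 4 * π / √(max p.1 p.2) * landauBracket φ p.1 p.2 :=
      funext fun p => Liso_eq_mul_landauBracket φ p.1 p.2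
    have h_sqrt : Continuous fun p : ℝ × ℝ => √(max p.1 p.2) := by fun_prop
    rw [h_eq]
    exact ((continuousAt_const.div h_sqrt.continuousAt (Real.sqrt_pos.2 h).ne').mul
      (continuous_landauBracket hφ).continuousAt).continuousWithinAt

lemma exists_boundedContinuousFunction_eq_Liso (hφ : ContDiff ℝ 2 φ) (hs : HasCompactSupport φ) :
    ∃ L : ℝ × ℝ →ᵇ ℝ, ∀ x y, 0 ≤ x → 0 ≤ y → L (x, y) = Liso φ x y := by
  obtain ⟨M, hM⟩ := hs.deriv.deriv.exists_bound_of_continuous hφ.deriv'.continuous_deriv_one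
  obtain ⟨B, hB⟩ := exists_abs_Liso_le hφ hs
  have h_cont : Continuous fun p : ℝ × ℝ => Liso φ (max p.1 0) (max p.2 0) :=
    (continuousOn_uncurry_Liso hφ hM).comp_continuous (f := fun p : ℝ × ℝ =>
      (max p.1 0, max p.2 0)) (by fun_prop) fun p =>
        ⟨le_max_right p.1 0, le_max_right p.2 0⟩
  refine ⟨.ofNormedAddCommGroup _ h_cont B fun p => hB _ _ (le_max_right _ _) (le_max_right _ _),
    fun x y hx hy => ?_⟩
  simp [max_eq_left hx, max_eq_left hy]

end Kernel

/-! ### The collision form -/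

section Collision

/-- The collision form `∫∫ L[φ](x, y) dμ(x) dμ(y)`, the right-hand side of the weak equation. -/
def collision (φ : ℝ → ℝ) (μ : Measure ℝ) : ℝ := ∫ x, ∫ y, Liso φ x y ∂μ ∂μ

variable {φ : ℝ → ℝ} {μ : Measure ℝ}

lemma abs_collision_le {M : ℝ} (hμ : ∀ᵐ x ∂μ, 0 ≤ x) (h_int : Integrable (fun x => 1 + x) μ)
    (hd : Differentiable ℝ (deriv φ)) (hM : ∀ z, |deriv (deriv φ) z| ≤ M) :
    |collision φ μ| ≤ 16 * π / 3 * M * (∫ x, (1 + x) ∂μ) ^ 2 := by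
  have hM₀ : 0 ≤ M := (abs_nonneg _).trans (hM 0)
  have h_kernel : ∀ x y, 0 ≤ x → 0 ≤ y →
      |Liso φ x y| ≤ 16 * π / 3 * M * ((1 + x) * (1 + y)) := fun x y hx hy => by
    refine (abs_Liso_le hd hM hx hy).trans ?_
    gcongr
    rw [Real.sqrt_le_left (by positivity)]
    rcases max_choice x y with h | h <;> rw [h] <;> nlinarith [mul_nonneg hx hy]
  have h_inner : ∀ x, 0 ≤ x →
      |∫ y, Liso φ x y ∂μ| ≤ 16 * π / 3 * M * (1 + x) * ∫ y, (1 + y) ∂μ := fun x hx => by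
    rw [← integral_const_mul, ← Real.norm_eq_abs]
    refine norm_integral_le_of_norm_le (h_int.const_mul _) ?_
    filter_upwards [hμ] with y hy
    rw [mul_assoc]
    exact h_kernel x y hx hy
  calc |collision φ μ| ≤ ∫ x, 16 * π / 3 * M * (1 + x) * (∫ y, (1 + y) ∂μ) ∂μ :=
        by
        rw [← Real.norm_eq_abs]
        exact norm_integral_le_of_norm_le ((h_int.const_mul _).mul_const _) (hμ.mono h_inner)
    _ = 16 * π / 3 * M * (∫ x, (1 + x) ∂μ) ^ 2 := by
        rw [integral_mul_const, integral_const_mul]; ring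

lemma collision_eq_integral_prod [IsFiniteMeasure μ] (hμ : ∀ᵐ x ∂μ, 0 ≤ x) {L : ℝ × ℝ →ᵇ ℝ}
    (hL : ∀ x y, 0 ≤ x → 0 ≤ y → L (x, y) = Liso φ x y) :
    collision φ μ = ∫ p, L p ∂(μ.prod μ) := by
  rw [integral_prod _ (L.integrable _)]
  refine integral_congr_ae (hμ.mono fun x hx => integral_congr_ae (hμ.mono fun y hy => ?_))
  exact (hL x y hx hy).symm

end Collision

/-! ### Measurability of primitives -/

section Primitive

variable {α : Type*} [LinearOrder α] [TopologicalSpace α] [OrderTopology α]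

lemma exists_mem_Iic_mem_nhdsWithin {s : Set α} {a : α} (ha : a ∈ s) :
    ∃ b ∈ s, Set.Iic b ∈ 𝓝[s] a := by
  by_cases h : ∃ b ∈ s, a < b
  · obtain ⟨b, hb, hab⟩ := h
    exact ⟨b, hb, mem_nhdsWithin_of_mem_nhds (Iic_mem_nhds hab)⟩
  · push Not at h
    exact ⟨a, ha, mem_of_superset self_mem_nhdsWithin h⟩

lemma exists_mem_Ici_mem_nhdsWithin {s : Set α} {a : α} (ha : a ∈ s) :
    ∃ b ∈ s, Set.Ici b ∈ 𝓝[s] a :=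
  exists_mem_Iic_mem_nhdsWithin (α := αᵒᵈ) ha

variable {E : Type*} [NormedAddCommGroup E] {μ : Measure ℝ}

lemma ordConnected_intervalIntegrable (g : ℝ → E) (a : ℝ) :
    {t | IntervalIntegrable g μ a t}.OrdConnected := by
  refine ⟨fun s hs t ht r hr => ?_⟩
  exact hs.trans ((hs.symm.trans ht).mono_set (Set.uIcc_subset_uIcc_left (Set.Icc_subset_uIcc hr)))

lemma continuousOn_primitive_of_intervalIntegrable [NormedSpace ℝ E] [NullSingletonClass μ]
    (g : ℝ → E) (a : ℝ) :
    ContinuousOn (fun t => ∫ s in a..t, g s ∂μ) {t | IntervalIntegrable g μ a t} := by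
  intro t ht
  obtain ⟨c, hc, hc_nhds⟩ := exists_mem_Ici_mem_nhdsWithin ht
  obtain ⟨d, hd, hd_nhds⟩ := exists_mem_Iic_mem_nhdsWithin ht
  have h_int : IntervalIntegrable g μ (min a c) (max a d) := by
    rcases min_choice a c with h | h <;> rcases max_choice a d with h' | h' <;> rw [h, h']
    exacts [hd, hc.symm, hc.symm.trans hd]
  refine (intervalIntegral.continuousWithinAt_primitive (measure_singleton t)
    h_int).mono_of_mem_nhdsWithin ?_
  filter_upwards [hc_nhds, hd_nhds] with r hcr hrd using ⟨hcr, hrd⟩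

-- Where `g` is not integrable, its Bochner integral is `0` by convention.
lemma measurable_primitive [NullSingletonClass μ] (g : ℝ → ℝ) (a : ℝ) :
    Measurable fun t => ∫ s in a..t, g s ∂μ := by
  classical
  have h := ContinuousOn.measurable_piecewise (g := fun _ => (0 : ℝ))
    (continuousOn_primitive_of_intervalIntegrable (μ := μ) g a) continuousOn_const
    (ordConnected_intervalIntegrable g a).measurableSet
  convert h using 1
  ext t
  simp only [Set.piecewise, Set.mem_ofPred_eq]
  split_ifs with ht
  · rfl
  · exact intervalIntegral.integral_undef ht

end Primitive

/-! ### Smooth compactly supported functions determine finite measures -/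

section SmoothTestFunctions

variable {E : Type*} [NormedAddCommGroup E] [NormedSpace ℝ E] [FiniteDimensional ℝ E]

lemma tendsto_bump_smul {ι : Type*} {l : Filter ι} {c : ι → ℝ} (χ : ContDiffBump (0 : E))
    (hc : Tendsto c l (𝓝 0)) (x : E) : Tendsto (fun i => χ (c i • x)) l (𝓝 1) := by
  have h_one : χ ((0 : ℝ) • x) = 1 :=
    χ.one_of_mem_closedBall (by simpa using χ.rIn_pos.le)
  exact h_one ▸ (χ.continuous.tendsto _).comp (hc.smul_const x)

lemma exists_contDiff_tendsto_indicator {U : Set E} (hU : IsOpen U) :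
    ∃ φ : ℕ → E → ℝ, (∀ n, ContDiff ℝ ∞ (φ n)) ∧ (∀ n, HasCompactSupport (φ n)) ∧
      (∀ n x, φ n x ∈ Set.Icc 0 (U.indicator 1 x)) ∧
      ∀ x, Tendsto (fun n => φ n x) atTop (𝓝 (U.indicator 1 x)) := by
  obtain ⟨f, hf_supp, hf, hf_range⟩ := hU.exists_contDiff_support_eq (n := ⊤)
  let χ : ContDiffBump (0 : E) := default
  have hf_zero : ∀ x ∉ U, f x = 0 := fun x hx =>
    Function.notMem_support.1 (hf_supp ▸ hx)
  have hf_pos : ∀ x ∈ U, 0 < f x := fun x hx =>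
    (hf_range ⟨x, rfl⟩).1.lt_of_ne' (Function.mem_support.1 (hf_supp ▸ hx))
  refine ⟨fun n x => Real.smoothTransition (n * f x) * χ ((1 / (n + 1 : ℝ)) • x),
    fun n => ?_, fun n => ?_, fun n x => ⟨?_, ?_⟩, fun x => ?_⟩
  · exact (Real.smoothTransition.contDiff.comp (contDiff_const.mul hf)).mul
      (χ.contDiff.comp (contDiff_const_smul _))
  · exact (χ.hasCompactSupport.comp_smul (by positivity)).mul_left
  · exact mul_nonneg (Real.smoothTransition.nonneg _) χ.nonneg
  · by_cases hx : x ∈ U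
    · rw [Set.indicator_of_mem hx]
      exact mul_le_one₀ (Real.smoothTransition.le_one _) χ.nonneg χ.le_one
    · simp [hf_zero x hx, hx]
  · by_cases hx : x ∈ U
    · have h_trans : ∀ᶠ n : ℕ in atTop, Real.smoothTransition (n * f x) = 1 :=
        ((tendsto_natCast_atTop_atTop.atTop_mul_const (hf_pos x hx)).eventually_ge_atTop 1).mono
          fun n hn => Real.smoothTransition.one_of_one_le hn
      rw [Set.indicator_of_mem hx, Pi.one_apply]
      refine (tendsto_bump_smul χ tendsto_one_div_add_atTop_nhds_zero_nat x).congr' ?_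
      filter_upwards [h_trans] with n hn
      rw [hn, one_mul]
    · simp [hf_zero x hx, hx]

variable [MeasurableSpace E] [BorelSpace E]

lemma exists_contDiff_tendsto_measureReal {U : Set E} (hU : IsOpen U) :
    ∃ φ : ℕ → E → ℝ, (∀ n, ContDiff ℝ ∞ (φ n)) ∧ (∀ n, HasCompactSupport (φ n)) ∧
      ∀ (μ : Measure E) [IsFiniteMeasure μ], (∀ n, ∫ x, φ n x ∂μ ≤ μ.real U) ∧
        Tendsto (fun n => ∫ x, φ n x ∂μ) atTop (𝓝 (μ.real U)) := by
  obtain ⟨φ, hφ, hs, hφ_mem, hφ_lim⟩ := exists_contDiff_tendsto_indicator hU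
  refine ⟨φ, hφ, hs, fun μ _ => ?_⟩
  have h_indicator : Integrable (U.indicator (1 : E → ℝ)) μ :=
    (integrable_const 1).indicator hU.measurableSet
  rw [← integral_indicator_one hU.measurableSet]
  refine ⟨fun n => integral_mono_of_nonneg (ae_of_all _ fun x => (hφ_mem n x).1) h_indicator
    (ae_of_all _ fun x => (hφ_mem n x).2), ?_⟩
  refine tendsto_integral_of_dominated_convergence _
    (fun n => (hφ n).continuous.aestronglyMeasurable) h_indicator (fun n => ae_of_all _ fun x => ?_)
    (ae_of_all _ hφ_lim)
  rw [Real.norm_of_nonneg (hφ_mem n x).1]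
  exact (hφ_mem n x).2

lemma measurable_measure_of_contDiff {α : Type*} [MeasurableSpace α] {G : α → Measure E}
    [∀ a, IsFiniteMeasure (G a)]
    (hG : ∀ φ : E → ℝ, ContDiff ℝ ∞ φ → HasCompactSupport φ →
      Measurable fun a => ∫ x, φ x ∂G a) : Measurable G := by
  have h_open : ∀ U : Set E, IsOpen U → Measurable fun a => G a U := fun U hU => by
    obtain ⟨φ, hφ, hs, hφ_lim⟩ := exists_contDiff_tendsto_measureReal hU
    have h_real : Measurable fun a => (G a).real U :=
      measurable_of_tendsto_metrizable (fun n => hG (φ n) (hφ n) (hs n))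
        (tendsto_pi_nhds.2 fun a => (hφ_lim (G a)).2)
    simpa [measureReal_def] using h_real.ennreal_ofReal
  exact .measure_of_isPiSystem BorelSpace.measurable_eq isPiSystem_isOpen h_open
    (h_open _ isOpen_univ)

variable {ι : Type*} {l : Filter ι} [l.IsCountablyGenerated]

lemma tendsto_probabilityMeasure_of_contDiff {μs : ι → ProbabilityMeasure E}
    {μ : ProbabilityMeasure E}
    (h : ∀ φ : E → ℝ, ContDiff ℝ ∞ φ → HasCompactSupport φ →
      Tendsto (fun i => ∫ x, φ x ∂μs i) l (𝓝 (∫ x, φ x ∂μ))) :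
    Tendsto μs l (𝓝 μ) := by
  refine tendsto_of_forall_isOpen_le_liminf' fun U hU => ?_
  obtain ⟨φ, hφ, hs, hφ_lim⟩ := exists_contDiff_tendsto_measureReal hU
  rw [le_liminf_iff]
  intro a ha
  have ha_lt : a.toReal < (μ : Measure E).real U :=
    ENNReal.toReal_strict_mono (measure_ne_top _ _) ha
  obtain ⟨n, hn⟩ := ((hφ_lim μ).2.eventually_const_lt ha_lt).exists
  filter_upwards [(h (φ n) (hφ n) (hs n)).eventually_const_lt hn] with i hi
  exact (ENNReal.toReal_lt_toReal ha.ne_top (measure_ne_top _ _)).1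
    (hi.trans_le ((hφ_lim (μs i)).1 n))

-- Convergence of the masses excludes escape to infinity; normalising reduces to probabilities.
lemma tendsto_finiteMeasure_of_contDiff {μs : ι → FiniteMeasure E} {μ : FiniteMeasure E}
    (h_mass : Tendsto (fun i => (μs i).mass) l (𝓝 μ.mass))
    (h : ∀ φ : E → ℝ, ContDiff ℝ ∞ φ → HasCompactSupport φ →
      Tendsto (fun i => ∫ x, φ x ∂μs i) l (𝓝 (∫ x, φ x ∂μ))) :
    Tendsto μs l (𝓝 μ) := by
  rcases eq_or_ne μ 0 with rfl | hμ
  · exact FiniteMeasure.tendsto_zero_of_tendsto_zero_mass (by simpa using h_mass)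
  refine FiniteMeasure.tendsto_of_tendsto_normalize_testAgainstNN_of_tendsto_mass ?_ h_mass
  refine tendsto_probabilityMeasure_of_contDiff fun φ hφ hs => ?_
  have h_mass_ne : μ.mass ≠ 0 := (FiniteMeasure.mass_nonzero_iff μ).2 hμ
  have h_integral : ∀ ν : FiniteMeasure E, ν.mass ≠ 0 →
      ∫ x, φ x ∂ν.normalize = ν.mass⁻¹ • ∫ x, φ x ∂ν := fun ν hν => by
    rw [ν.toMeasure_normalize_eq_of_nonzero ((FiniteMeasure.mass_nonzero_iff ν).1 hν),
      integral_smul_nnreal_measure]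
  rw [h_integral μ h_mass_ne]
  refine ((h_mass.inv₀ h_mass_ne).smul (h φ hφ hs)).congr' ?_
  filter_upwards [h_mass.eventually_ne h_mass_ne] with i hi using (h_integral (μs i) hi).symm

end SmoothTestFunctions

section Product

variable {X Y : Type*} [MeasurableSpace X] [MeasurableSpace Y]

lemma finiteMeasure_prod_eq_smul_normalize [Nonempty X] [Nonempty Y] (μ : FiniteMeasure X)
    (ν : FiniteMeasure Y) :
    μ.prod ν = (μ.mass * ν.mass) • (μ.normalize.prod ν.normalize).toFiniteMeasure := by
  apply FiniteMeasure.toMeasure_injective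
  nth_rewrite 1 [μ.self_eq_mass_smul_normalize, ν.self_eq_mass_smul_normalize]
  simp [Measure.prod_smul_left, Measure.prod_smul_right, smul_smul, mul_comm]

variable [TopologicalSpace X] [TopologicalSpace Y] [SecondCountableTopology X]
  [SecondCountableTopology Y] [TopologicalSpace.PseudoMetrizableSpace X]
  [TopologicalSpace.PseudoMetrizableSpace Y] [OpensMeasurableSpace X]
  [OpensMeasurableSpace Y]

lemma tendsto_finiteMeasure_prod [Nonempty X] [Nonempty Y] {ι : Type*} {l : Filter ι}
    {μs : ι → FiniteMeasure X} {μ : FiniteMeasure X} {νs : ι → FiniteMeasure Y}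
    {ν : FiniteMeasure Y} (hμ : Tendsto μs l (𝓝 μ)) (hν : Tendsto νs l (𝓝 ν)) :
    Tendsto (fun i => (μs i).prod (νs i)) l (𝓝 (μ.prod ν)) := by
  have h_mass : Tendsto (fun i => (μs i).mass * (νs i).mass) l (𝓝 (μ.mass * ν.mass)) :=
    hμ.mass.mul hν.mass
  by_cases h : μ = 0 ∨ ν = 0
  · have h_zero : μ.prod ν = 0 := by rcases h with rfl | rfl <;> simp
    rw [h_zero]
    refine FiniteMeasure.tendsto_zero_of_tendsto_zero_mass ?_
    simpa only [FiniteMeasure.mass_prod, ← μ.mass_prod ν, h_zero, FiniteMeasure.zero_mass]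
      using h_mass
  · push Not at h
    simp only [finiteMeasure_prod_eq_smul_normalize]
    refine h_mass.smul ?_
    exact (ProbabilityMeasure.toFiniteMeasure_continuous.comp
      ProbabilityMeasure.continuous_prod).tendsto (μ.normalize, ν.normalize) |>.comp
      ((FiniteMeasure.tendsto_normalize_of_tendsto hμ h.1).prodMk_nhds
        (FiniteMeasure.tendsto_normalize_of_tendsto hν h.2))

end Product

/-! ### Weak solutions -/

/-- Weak solutions of the isotropic Landau equation: time-dependent finite measures carried by
`[0, ∞)`, with uniformly bounded mass and energy, satisfying the integrated weak equation against
every `C²_c` function. Times are nonnegative reals, and the measures live on `ℝ`. -/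
structure IsWeakSolution (F : ℝ≥0 → FiniteMeasure ℝ) : Prop where
  ae_nonneg : ∀ t, ∀ᵐ x ∂(F t : Measure ℝ), 0 ≤ x
  exists_lintegral_le : ∃ C : ℝ≥0, ∀ t, ∫⁻ x, ENNReal.ofReal (1 + x) ∂F t ≤ C
  integral_eq : ∀ φ : ℝ → ℝ, ContDiff ℝ 2 φ → HasCompactSupport φ → ∀ t : ℝ≥0,
    ∫ x, φ x ∂F t = ∫ x, φ x ∂F 0 + ∫ s in (0 : ℝ)..t, collision φ (F s.toNNReal)

lemma deriv_deriv_pow_mul_comp_mul {k : ℕ} (hk : k ≤ 2) {c : ℝ} (hc : c ≠ 0) (χ : ℝ → ℝ) (x : ℝ) :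
    deriv (deriv fun z => z ^ k * χ (c * z)) x =
      c ^ (2 - k) * deriv (deriv fun z => z ^ k * χ z) (c * x) := by
  set g : ℝ → ℝ := fun z => z ^ k * χ z with hg
  have h_rescale : (fun z => z ^ k * χ (c * z)) = fun z => (c ^ k)⁻¹ * g (c * z) := by
    funext z
    simp only [hg]
    rw [mul_pow, ← mul_assoc, ← mul_assoc, inv_mul_cancel₀ (pow_ne_zero k hc), one_mul]
  have h_deriv : (deriv fun z => (c ^ k)⁻¹ * g (c * z)) =
      fun z => (c ^ k)⁻¹ * (c * deriv g (c * z)) := by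
    funext z
    rw [deriv_const_mul_field, deriv_comp_mul_left, smul_eq_mul]
  rw [h_rescale, h_deriv, deriv_const_mul_field, deriv_const_mul_field, deriv_comp_mul_left,
    pow_sub₀ c hc hk, smul_eq_mul]
  ring

namespace IsWeakSolution

variable {F : ℝ≥0 → FiniteMeasure ℝ} {φ : ℝ → ℝ}

lemma integrable_one_add (h : IsWeakSolution F) (t : ℝ≥0) :
    Integrable (fun x => 1 + x) (F t : Measure ℝ) := by
  obtain ⟨C, hC⟩ := h.exists_lintegral_le
  refine ⟨by fun_prop, ?_⟩
  rw [hasFiniteIntegral_iff_ofReal ((h.ae_nonneg t).mono fun x hx => add_nonneg zero_le_one hx)]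
  exact (hC t).trans_lt ENNReal.coe_lt_top

lemma exists_integral_one_add_le (h : IsWeakSolution F) :
    ∃ C : ℝ, ∀ t, ∫ x, (1 + x) ∂F t ∈ Set.Icc 0 C := by
  obtain ⟨C, hC⟩ := h.exists_lintegral_le
  refine ⟨C, fun t => ?_⟩
  have h_nonneg : ∀ᵐ x ∂(F t : Measure ℝ), 0 ≤ 1 + x :=
    (h.ae_nonneg t).mono fun x hx => add_nonneg zero_le_one hx
  refine ⟨integral_nonneg_of_ae h_nonneg, ?_⟩
  rw [integral_eq_lintegral_of_nonneg_ae h_nonneg (h.integrable_one_add t).aestronglyMeasurable]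
  exact ENNReal.toReal_mono ENNReal.coe_ne_top (hC t)

lemma exists_abs_collision_le (h : IsWeakSolution F) :
    ∃ K, ∀ φ M, Differentiable ℝ (deriv φ) → (∀ z, |deriv (deriv φ) z| ≤ M) →
      ∀ t, |collision φ (F t)| ≤ K * M := by
  obtain ⟨C, hC⟩ := h.exists_integral_one_add_le
  refine ⟨16 * π / 3 * C ^ 2, fun φ M hd hM t => ?_⟩
  have hM₀ : 0 ≤ M := (abs_nonneg _).trans (hM 0)
  calc |collision φ (F t)| ≤ 16 * π / 3 * M * (∫ x, (1 + x) ∂F t) ^ 2 :=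
        abs_collision_le (h.ae_nonneg t) (h.integrable_one_add t) hd hM
    _ ≤ 16 * π / 3 * M * C ^ 2 := by
        gcongr
        exacts [(hC t).1, (hC t).2]
    _ = 16 * π / 3 * C ^ 2 * M := by ring

/-! ### Conservation laws -/

lemma integral_eq_of_tendsto (h : IsWeakSolution F) {f : ℝ → ℝ} {φ : ℕ → ℝ → ℝ} {M : ℕ → ℝ}
    (hφ : ∀ n, ContDiff ℝ 2 (φ n)) (hs : ∀ n, HasCompactSupport (φ n))
    (hM : ∀ n z, |deriv (deriv (φ n)) z| ≤ M n) (hM_lim : Tendsto M atTop (𝓝 0))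
    (h_le : ∀ n x, 0 ≤ x → |φ n x| ≤ 1 + x)
    (h_lim : ∀ x, Tendsto (fun n => φ n x) atTop (𝓝 (f x))) (t : ℝ≥0) :
    ∫ x, f x ∂F t = ∫ x, f x ∂F 0 := by
  obtain ⟨K, hK⟩ := h.exists_abs_collision_le
  have h_integral : ∀ s, Tendsto (fun n => ∫ x, φ n x ∂F s) atTop (𝓝 (∫ x, f x ∂F s)) := fun s =>
    tendsto_integral_of_dominated_convergence _
      (fun n => (hφ n).continuous.aestronglyMeasurable) (h.integrable_one_add s)
      (fun n => (h.ae_nonneg s).mono (h_le n)) (ae_of_all _ h_lim)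
  have h_collision : Tendsto (fun n => ∫ s in (0 : ℝ)..t, collision (φ n) (F s.toNNReal))
      atTop (𝓝 0) := by
    refine squeeze_zero_norm (fun n => intervalIntegral.norm_integral_le_of_norm_le_const
      fun s _ => hK (φ n) (M n) (hφ n).differentiable_deriv_two (hM n) s.toNNReal) ?_
    simpa using (hM_lim.const_mul K).mul_const |(t : ℝ) - 0|
  refine tendsto_nhds_unique (h_integral t) ?_
  simpa only [← h.integral_eq _ (hφ _) (hs _), add_zero] using (h_integral 0).add h_collision

-- Rescaling a cutoff `χ` turns the second derivative of `z ^ k * χ z` into `O(c ^ (2 - k))`.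
lemma integral_pow_eq (h : IsWeakSolution F) {k : ℕ} (hk : k ≤ 1) (t : ℝ≥0) :
    ∫ x : ℝ, x ^ k ∂F t = ∫ x : ℝ, x ^ k ∂F 0 := by
  let χ : ContDiffBump (0 : ℝ) := default
  let c : ℕ → ℝ := fun n => 1 / (n + 1)
  have hc_ne : ∀ n, c n ≠ 0 := fun n => by positivity
  have hc_lim : Tendsto c atTop (𝓝 0) := tendsto_one_div_add_atTop_nhds_zero_nat
  have h_smooth : ContDiff ℝ 2 fun z => z ^ k * χ z := (contDiff_id.pow k).mul χ.contDiff
  obtain ⟨K, hK⟩ := (χ.hasCompactSupport.mul_left (f := fun z : ℝ => z ^ k)).deriv.deriv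
    |>.exists_bound_of_continuous h_smooth.deriv'.continuous_deriv_one
  refine h.integral_eq_of_tendsto (φ := fun n z => z ^ k * χ (c n * z))
    (M := fun n => |c n ^ (2 - k)| * K) (fun n => ?_) (fun n => ?_) (fun n z => ?_) ?_
    (fun n x hx => ?_) (fun x => ?_) t
  · exact (contDiff_id.pow k).mul (χ.contDiff.comp (contDiff_const.mul contDiff_id))
  · exact (χ.hasCompactSupport.comp_smul (hc_ne n)).mul_left
  · rw [deriv_deriv_pow_mul_comp_mul (hk.trans one_le_two) (hc_ne n), abs_mul]
    gcongr
    exact hK _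
  · simpa [show 2 - k ≠ 0 by lia] using ((hc_lim.pow (2 - k)).abs.mul_const K)
  · rw [abs_of_nonneg (mul_nonneg (pow_nonneg hx k) χ.nonneg)]
    refine (mul_le_of_le_one_right (pow_nonneg hx k) χ.le_one).trans ?_
    interval_cases k <;> linarith [pow_zero x, pow_one x]
  · simpa using (tendsto_bump_smul χ hc_lim x).const_mul (x ^ k)

lemma measure_univ_eq (h : IsWeakSolution F) (t : ℝ≥0) :
    (F t : Measure ℝ) Set.univ = (F 0 : Measure ℝ) Set.univ := by
  refine (ENNReal.toReal_eq_toReal_iff' (measure_ne_top _ _) (measure_ne_top _ _)).1 ?_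
  simpa [measureReal_def] using h.integral_pow_eq zero_le_one t

lemma integral_id_eq (h : IsWeakSolution F) (t : ℝ≥0) : ∫ x : ℝ, x ∂F t = ∫ x : ℝ, x ∂F 0 := by
  simpa only [pow_one] using h.integral_pow_eq le_rfl t

/-! ### Regularity in time -/

lemma measurable_toMeasure (h : IsWeakSolution F) : Measurable fun t => (F t : Measure ℝ) := by
  refine measurable_measure_of_contDiff fun φ hφ hs => ?_
  rw [funext (h.integral_eq φ (hφ.of_le (by norm_cast)) hs)]
  exact ((measurable_primitive _ 0).comp measurable_subtype_coe).const_add _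

lemma measurable_collision (h : IsWeakSolution F) (hφ : ContDiff ℝ 2 φ)
    (hs : HasCompactSupport φ) : Measurable fun t => collision φ (F t) := by
  obtain ⟨L, hL⟩ := exists_boundedContinuousFunction_eq_Liso hφ hs
  let κ : ProbabilityTheory.Kernel ℝ≥0 ℝ := ⟨fun t => F t, h.measurable_toMeasure⟩
  have : ProbabilityTheory.IsFiniteKernel κ :=
    ⟨(F 0 : Measure ℝ) Set.univ, measure_lt_top _ _, fun t => (h.measure_univ_eq t).le⟩
  have h_prod : ∀ t, collision φ (F t) = ∫ p, L p ∂(κ.prod κ t) := fun t => by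
    rw [ProbabilityTheory.Kernel.prod_apply]
    exact collision_eq_integral_prod (h.ae_nonneg t) hL
  simp only [h_prod]
  exact (L.continuous.stronglyMeasurable.integral_kernel (κ := κ.prod κ)).measurable

lemma intervalIntegrable_collision (h : IsWeakSolution F) (hφ : ContDiff ℝ 2 φ)
    (hs : HasCompactSupport φ) (a b : ℝ) :
    IntervalIntegrable (fun s : ℝ => collision φ (F s.toNNReal)) volume a b := by
  obtain ⟨M, hM⟩ := hs.deriv.deriv.exists_bound_of_continuous hφ.deriv'.continuous_deriv_one
  obtain ⟨K, hK⟩ := h.exists_abs_collision_le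
  refine (intervalIntegrable_const (c := K * M)).mono_fun
    ((h.measurable_collision hφ hs).comp measurable_real_toNNReal).aestronglyMeasurable ?_
  exact ae_of_all _ fun s =>
    (hK φ M hφ.differentiable_deriv_two hM s.toNNReal).trans (le_abs_self _)

lemma continuous_integral (h : IsWeakSolution F) (hφ : ContDiff ℝ 2 φ)
    (hs : HasCompactSupport φ) : Continuous fun t => ∫ x, φ x ∂F t := by
  rw [funext (h.integral_eq φ hφ hs)]
  exact continuous_const.add ((intervalIntegral.continuous_primitive
    (h.intervalIntegrable_collision hφ hs) 0).comp NNReal.continuous_coe)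

lemma continuous (h : IsWeakSolution F) : Continuous F := by
  have h_mass : ∀ t, (F t).mass = (F 0).mass := fun t =>
    congrArg ENNReal.toNNReal (h.measure_univ_eq t)
  refine continuous_iff_continuousAt.2 fun t => tendsto_finiteMeasure_of_contDiff ?_ ?_
  · rw [funext h_mass, h_mass t]
    exact tendsto_const_nhds
  · exact fun φ hφ hs => (h.continuous_integral (hφ.of_le (by norm_cast)) hs).tendsto t

lemma continuous_collision (h : IsWeakSolution F) (hφ : ContDiff ℝ 2 φ)
    (hs : HasCompactSupport φ) : Continuous fun t => collision φ (F t) := by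
  obtain ⟨L, hL⟩ := exists_boundedContinuousFunction_eq_Liso hφ hs
  refine continuous_iff_continuousAt.2 fun t => ?_
  simp_rw [fun s => collision_eq_integral_prod (h.ae_nonneg s) hL]
  exact FiniteMeasure.tendsto_iff_forall_integral_tendsto.1
    (tendsto_finiteMeasure_prod (h.continuous.tendsto t) (h.continuous.tendsto t)) L

lemma hasDerivWithinAt_integral (h : IsWeakSolution F) (hφ : ContDiff ℝ 2 φ)
    (hs : HasCompactSupport φ) (t : ℝ≥0) :
    HasDerivWithinAt (fun τ : ℝ => ∫ x, φ x ∂F τ.toNNReal) (collision φ (F t)) (Set.Ici 0) t := by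
  have h_cont : Continuous fun s : ℝ => collision φ (F s.toNNReal) :=
    (h.continuous_collision hφ hs).comp continuous_real_toNNReal
  have h_deriv : HasDerivAt
      (fun τ : ℝ => ∫ x, φ x ∂F 0 + ∫ s in (0 : ℝ)..τ, collision φ (F s.toNNReal))
      (collision φ (F t)) t := by
    simpa using (h_cont.integral_hasStrictDerivAt 0 t).hasDerivAt.const_add (∫ x, φ x ∂F 0)
  have h_eq : ∀ τ : ℝ, 0 ≤ τ → ∫ x, φ x ∂F τ.toNNReal =
      ∫ x, φ x ∂F 0 + ∫ s in (0 : ℝ)..τ, collision φ (F s.toNNReal) := fun τ hτ => by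
    rw [h.integral_eq φ hφ hs, Real.coe_toNNReal τ hτ]
  exact h_deriv.hasDerivWithinAt.congr (fun τ hτ => h_eq τ hτ) (h_eq t t.2)

end IsWeakSolution

/-- If `{F_t}_{t≥0}` is a family of finite positive Borel measures on `[0,∞)`
with uniformly bounded first moment satisfying the integrated weak form of the isotropic
Fokker–Planck–Landau equation for all `φ ∈ C²_c([0,∞))`, then `F_t` conserves mass and energy,
and for each such `φ` the map `t ↦ ∫ φ dF_t` is `C¹` on `[0,∞)` with derivative
`∫∫ L[φ] dF_t dF_t`. -/
theorem stmt10 (F : ℝ → Measure ℝ)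
    (hfin : ∀ t : ℝ, 0 ≤ t → IsFiniteMeasure (F t))
    (hsupp : ∀ t : ℝ, 0 ≤ t → F t (Set.Iio 0) = 0)
    (hmom : ∃ C : ℝ, ∀ t : ℝ, 0 ≤ t →
      (∫⁻ x, ENNReal.ofReal (1 + x) ∂(F t)) ≤ ENNReal.ofReal C)
    (hweak : ∀ φ : ℝ → ℝ, ContDiff ℝ 2 φ → HasCompactSupport φ → ∀ t : ℝ, 0 ≤ t →
      (∫ x, φ x ∂(F t)) = (∫ x, φ x ∂(F 0)) +
        ∫ s in (0 : ℝ)..t, ∫ x, ∫ y, Liso φ x y ∂(F s) ∂(F s)) :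
    (∀ t : ℝ, 0 ≤ t →
      F t Set.univ = F 0 Set.univ ∧ (∫ x, x ∂(F t)) = ∫ x, x ∂(F 0)) ∧
    (∀ φ : ℝ → ℝ, ContDiff ℝ 2 φ → HasCompactSupport φ →
      (∀ t : ℝ, 0 ≤ t →
        HasDerivWithinAt (fun τ => ∫ x, φ x ∂(F τ))
          (∫ x, ∫ y, Liso φ x y ∂(F t) ∂(F t)) (Set.Ici 0) t) ∧
      ContinuousOn (fun t => ∫ x, ∫ y, Liso φ x y ∂(F t) ∂(F t)) (Set.Ici 0)) := by
  obtain ⟨C, hC⟩ := hmom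
  let G : ℝ≥0 → FiniteMeasure ℝ := fun t => ⟨F t, hfin t t.2⟩
  have hG : ∀ t : ℝ, 0 ≤ t → (G t.toNNReal : Measure ℝ) = F t := fun t ht =>
    congrArg F (Real.coe_toNNReal t ht)
  have h : IsWeakSolution G :=
    { ae_nonneg := fun t => ae_iff.2 (measure_mono_null (fun x hx => not_le.1 hx) (hsupp t t.2))
      exists_lintegral_le := ⟨C.toNNReal, fun t => hC t t.2⟩
      integral_eq := fun φ hφ hs t => by
        refine (hweak φ hφ hs t t.2).trans (congrArg _ ?_)
        refine intervalIntegral.integral_congr fun s hst => ?_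
        rw [Set.uIcc_of_le t.coe_nonneg] at hst
        simp only [hG s hst.1, collision] }
  refine ⟨fun t ht => ⟨h.measure_univ_eq ⟨t, ht⟩, h.integral_id_eq ⟨t, ht⟩⟩,
    fun φ hφ hs => ⟨fun t ht => ?_, ?_⟩⟩
  · lift t to ℝ≥0 using ht
    refine (h.hasDerivWithinAt_integral hφ hs t).congr (fun τ hτ => ?_) ?_
    · rw [hG τ hτ]
    · rw [hG t t.2]
  · exact continuousOn_iff_continuous_domRestrict.2 (h.continuous_collision hφ hs)

end
end

section
/- Let φ̂ : [0,∞) → ℝ be Borel measurable with ∫₀^∞ r³ φ̂(r)² dr = 1/(2π), and suppose there exists r₀ ≥ 0 such that r ↦ r φ̂(r) is monotone on (r₀, ∞). Then for every ρ > 0 the limit φ(ρ) := lim_{R→∞} (1/(2π²ρ)) ∫₀^R r φ̂(r) sin(ρ r) dr exists, and there is a constant 0 < C < ∞ such that sup_{R>0} |(1/(2π²ρ)) ∫₀^R r φ̂(r) sin(ρ r) dr| ≤ C (1 + ρ^{−2}) and |φ(ρ)| ≤ C (1 + ρ^{−2}) for all ρ > 0. -/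
/-!
Write `g r = r * φ̂ r`, so that the normalisation says that `r * g r ^ 2` is integrable on `(0, ∞)`.
Being eventually monotone and square integrable at infinity, `g` tends to zero there. Bonnet's form
of the second mean value theorem, `‖∫ₐᵇ g f‖ ≤ |g a| * sup ‖∫ₐˣ f‖`, follows from the layer-cake
formula for `g`, because the superlevel sets of a monotone function are intervals. Applied to
`f r = sin (ρ r)`, whose integrals are at most `2 / ρ`, it bounds the integral over `[a, R]`
uniformly in `R` and, with `a → ∞`, gives Dirichlet's test for convergence.

On `[0, a]` one writes `g r * sin (ρ r) = ρ * (r * g r * sinc (ρ r))`, where `r * g r` is integrable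
because `|g| ≤ 1 + g ^ 2`; this part of the integral is `O(ρ)`. Dividing `O(ρ) + O(1 / ρ)` by
`2 π² ρ` gives the bound.
-/

open MeasureTheory Real Filter
open scoped Topology

section SecondMeanValue

open Set

variable {E : Type*} [NormedAddCommGroup E] [NormedSpace ℝ E]
  {f : ℝ → E} {g : ℝ → ℝ} {a b M : ℝ}

lemma intervalIntegrable_smul_of_monotoneOn_or_antitoneOn
    (hg : MonotoneOn g (uIcc a b) ∨ AntitoneOn g (uIcc a b))
    (hf : IntervalIntegrable f volume a b) :
    IntervalIntegrable (fun r => g r • f r) volume a b := by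
  rw [intervalIntegrable_iff'] at hf ⊢
  exact Integrable.smul_of_top_right hf
    (hg.elim (·.memLp_isCompact isCompact_uIcc) (·.memLp_isCompact isCompact_uIcc))

lemma exists_setOf_le_inter_Ioc_ae_eq_Ioc {β : Type*} [Preorder β] {g : ℝ → β} (hab : a ≤ b)
    (hg : AntitoneOn g (Ioc a b)) (t : β) :
    ∃ s ∈ Icc a b, ({r | t ≤ g r} ∩ Ioc a b : Set ℝ) =ᵐ[volume] Ioc a s := by
  set S := {r | t ≤ g r} ∩ Ioc a b
  have hS_le : ∀ r ∈ insert a S, r ≤ b := by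
    rintro r (rfl | hr)
    exacts [hab, hr.2.2]
  have hbdd : BddAbove (insert a S) := ⟨b, hS_le⟩
  refine ⟨sSup (insert a S), ⟨le_csSup hbdd (mem_insert a S),
    csSup_le (insert_nonempty a S) hS_le⟩, EventuallyLE.antisymm ?_ ?_⟩
  · exact LE.le.eventuallyLE fun r hr => ⟨hr.2.1, le_csSup hbdd (mem_insert_of_mem a hr)⟩
  · have hsub : Ioo a (sSup (insert a S)) ⊆ S := by
      rintro r ⟨har, hrs⟩
      obtain ⟨x, rfl | hx, hrx⟩ := exists_lt_of_lt_csSup (insert_nonempty a S) hrs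
      · exact absurd hrx har.not_gt
      · have hr : r ∈ Ioc a b := ⟨har, hrx.le.trans hx.2.2⟩
        exact ⟨hx.1.trans (hg hr hx.2 hrx.le), hr⟩
    exact Ioo_ae_eq_Ioc.symm.le.trans hsub.eventuallyLE

lemma norm_integral_indicator_setOf_le_le (hab : a ≤ b) (hg : AntitoneOn g (Ioc a b))
    (hM : ∀ x ∈ Icc a b, ‖∫ r in a..x, f r‖ ≤ M) (t : ℝ) :
    ‖∫ r in Ioc a b, {r | t ≤ g r}.indicator f r‖ ≤ M := by
  obtain ⟨s, hs, hae⟩ := exists_setOf_le_inter_Ioc_ae_eq_Ioc hab hg t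
  have hmeas : NullMeasurableSet {r | t ≤ g r} (volume.restrict (Ioc a b)) :=
    nullMeasurableSet_le aemeasurable_const
      (aemeasurable_restrict_of_antitoneOn measurableSet_Ioc hg)
  rw [integral_indicator₀ hmeas, Measure.restrict_restrict₀ hmeas,
    setIntegral_congr_set hae, ← intervalIntegral.integral_of_le hs.1]
  exact hM s hs

variable [CompleteSpace E]

lemma norm_integral_smul_le_of_antitoneOn (hab : a ≤ b) (hg : AntitoneOn g (Icc a b))
    (hgb : 0 ≤ g b) (hf : IntervalIntegrable f volume a b)
    (hM : ∀ x ∈ Icc a b, ‖∫ r in a..x, f r‖ ≤ M) :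
    ‖∫ r in a..b, g r • f r‖ ≤ g a * M := by
  have hgIoc : AntitoneOn g (Ioc a b) := hg.mono Ioc_subset_Icc_self
  have hga : 0 ≤ g a := hgb.trans (hg (left_mem_Icc.2 hab) (right_mem_Icc.2 hab) hab)
  -- Layer-cake: `g r` is the length of `(0, g a] ∩ (-∞, g r]`, so Fubini turns the integral into
  -- an average over `t` of integrals of `f` over the superlevel intervals of `g`.
  let F : ℝ → ℝ → E := fun r t => {p : ℝ × ℝ | p.2 ≤ g p.1}.indicator (fun p => f p.1) (r, t)
  have hF : Integrable (Function.uncurry F)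
      ((volume.restrict (Ioc a b)).prod (volume.restrict (Ioc 0 (g a)))) := by
    have hgm : AEMeasurable g (volume.restrict (Ioc a b)) :=
      aemeasurable_restrict_of_antitoneOn measurableSet_Ioc hgIoc
    exact (((intervalIntegrable_iff_integrableOn_Ioc_of_le hab).1 hf).comp_fst _).indicator₀
      (nullMeasurableSet_le measurable_snd.aemeasurable hgm.comp_fst)
  have hlayer : ∀ r ∈ Ioc a b, g r • f r = ∫ t in Ioc 0 (g a), F r t := by
    intro r hr
    have hr' := Ioc_subset_Icc_self hr
    have hgr : 0 ≤ g r := hgb.trans (hg hr' (right_mem_Icc.2 hab) hr.2)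
    have hgra : g r ≤ g a := hg (left_mem_Icc.2 hab) hr' hr.1.le
    have hFr : F r = (Iic (g r)).indicator fun _ => f r := rfl
    rw [hFr, setIntegral_indicator measurableSet_Iic, Ioc_inter_Iic, min_eq_right hgra,
      setIntegral_const, volume_real_Ioc_of_le hgr, sub_zero]
  have hlevel (t : ℝ) : ‖∫ r in Ioc a b, F r t‖ ≤ M :=
    norm_integral_indicator_setOf_le_le hab hgIoc hM t
  calc ‖∫ r in a..b, g r • f r‖ = ‖∫ r in Ioc a b, ∫ t in Ioc 0 (g a), F r t‖ := by
        rw [intervalIntegral.integral_of_le hab, setIntegral_congr_fun measurableSet_Ioc hlayer]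
    _ = ‖∫ t in Ioc 0 (g a), ∫ r in Ioc a b, F r t‖ := by rw [integral_integral_swap hF]
    _ ≤ M * volume.real (Ioc 0 (g a)) :=
        norm_setIntegral_le_of_norm_le_const measure_Ioc_lt_top fun t _ => hlevel t
    _ = g a * M := by rw [volume_real_Ioc_of_le hga, sub_zero, mul_comm]

lemma norm_integral_smul_le_of_tendsto_zero
    (hg : MonotoneOn g (Ici a) ∨ AntitoneOn g (Ici a)) (hg0 : Tendsto g atTop (𝓝 0))
    (hab : a ≤ b) (hf : IntervalIntegrable f volume a b)
    (hM : ∀ x ∈ Icc a b, ‖∫ r in a..x, f r‖ ≤ M) :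
    ‖∫ r in a..b, g r • f r‖ ≤ |g a| * M := by
  have key {u : ℝ → ℝ} (hu : AntitoneOn u (Ici a)) (hu0 : Tendsto u atTop (𝓝 0)) :
      ‖∫ r in a..b, u r • f r‖ ≤ |u a| * M := by
    have hub : 0 ≤ u b := by
      refine le_of_tendsto hu0 ?_
      filter_upwards [eventually_ge_atTop b] with r hr using hu hab (hab.trans hr) hr
    rw [abs_of_nonneg (hub.trans (hu self_mem_Ici hab hab))]
    exact norm_integral_smul_le_of_antitoneOn hab (hu.mono Icc_subset_Ici_self) hub hf hM
  rcases hg with hg | hg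
  · simpa using key hg.neg (by simpa using hg0.neg)
  · exact key hg hg0

lemma exists_tendsto_integral_smul
    (hg : MonotoneOn g (Ici a) ∨ AntitoneOn g (Ici a)) (hg0 : Tendsto g atTop (𝓝 0))
    (hf : ∀ b, a ≤ b → IntervalIntegrable f volume a b)
    (hM : ∀ x y, a ≤ x → x ≤ y → ‖∫ r in x..y, f r‖ ≤ M) :
    ∃ l, Tendsto (fun R => ∫ r in a..R, g r • f r) atTop (𝓝 l) := by
  have hint {x y : ℝ} (hx : a ≤ x) (hy : a ≤ y) :
      IntervalIntegrable (fun r => g r • f r) volume x y := by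
    have hsub : uIcc x y ⊆ Ici a := fun r hr => (le_inf hx hy).trans hr.1
    exact intervalIntegrable_smul_of_monotoneOn_or_antitoneOn
      (hg.imp (·.mono hsub) (·.mono hsub)) ((hf x hx).symm.trans (hf y hy))
  have hcauchy : CauchySeq fun R => ∫ r in a..max a R, g r • f r := by
    refine cauchySeq_of_le_tendsto_0' (fun R => |g (max a R)| * M) (fun R R' hRR' => ?_) ?_
    · have hR : a ≤ max a R := le_max_left a R
      have hRR' : max a R ≤ max a R' := max_le_max_left a hRR'
      have hsub : Ici (max a R) ⊆ Ici a := Ici_subset_Ici.2 hR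
      rw [dist_comm, dist_eq_norm, intervalIntegral.integral_interval_sub_left
        (hint le_rfl (hR.trans hRR')) (hint le_rfl hR)]
      exact norm_integral_smul_le_of_tendsto_zero (hg.imp (·.mono hsub) (·.mono hsub)) hg0 hRR'
        ((hf _ hR).symm.trans (hf _ (hR.trans hRR'))) fun x hx => hM _ x hR hx.1
    · have hmax : Tendsto (max a) atTop atTop := tendsto_atTop_mono (le_max_right a) tendsto_id
      simpa using (hg0.comp hmax).abs.mul_const M
  obtain ⟨l, hl⟩ := cauchySeq_tendsto_of_complete hcauchy
  refine ⟨l, hl.congr' ?_⟩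
  filter_upwards [eventually_ge_atTop a] with R hR
  rw [max_eq_right hR]

end SecondMeanValue

section SineIntegral

open Set

variable {g : ℝ → ℝ} {a b ρ : ℝ}

lemma abs_integral_sin_mul_le (hρ : ρ ≠ 0) (x y : ℝ) :
    |∫ r in x..y, sin (ρ * r)| ≤ 2 / |ρ| := by
  rw [intervalIntegral.integral_comp_mul_left _ hρ, integral_sin, smul_eq_mul, abs_mul, abs_inv,
    div_eq_inv_mul]
  gcongr
  linarith [abs_sub (cos (ρ * x)) (cos (ρ * y)), abs_cos_le_one (ρ * x), abs_cos_le_one (ρ * y)]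

lemma self_mul_sinc (x : ℝ) : x * sinc x = sin x := by
  rcases eq_or_ne x 0 with rfl | hx
  · rw [zero_mul, sin_zero]
  · rw [sinc_of_ne_zero hx, mul_div_cancel₀ _ hx]

lemma mul_sin_mul_eq_mul_sinc (u ρ r : ℝ) : u * sin (ρ * r) = ρ * (r * u * sinc (ρ * r)) := by
  rw [← self_mul_sinc]
  ring

lemma intervalIntegrable_mul_sin (hg : IntervalIntegrable (fun r => r * g r) volume a b) (ρ : ℝ) :
    IntervalIntegrable (fun r => g r * sin (ρ * r)) volume a b := by
  simp only [mul_sin_mul_eq_mul_sinc]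
  exact (hg.mul_continuousOn (by fun_prop)).const_mul ρ

lemma abs_integral_mul_sin_le_mul_integral_abs (hab : a ≤ b)
    (hg : IntervalIntegrable (fun r => r * g r) volume a b) (ρ : ℝ) :
    |∫ r in a..b, g r * sin (ρ * r)| ≤ |ρ| * ∫ r in a..b, |r * g r| := by
  simp only [mul_sin_mul_eq_mul_sinc, intervalIntegral.integral_const_mul, abs_mul ρ]
  gcongr
  refine intervalIntegral.norm_integral_le_of_norm_le (f := fun r => r * g r * sinc (ρ * r)) hab
    (ae_of_all _ fun r _ => ?_) hg.abs
  rw [norm_mul]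
  exact mul_le_of_le_one_right (norm_nonneg _) (abs_sinc_le_one _)

lemma exists_tendsto_integral_mul_sin
    (hint : IntervalIntegrable (fun r => r * g r) volume 0 a)
    (hg : MonotoneOn g (Ici a) ∨ AntitoneOn g (Ici a)) (hg0 : Tendsto g atTop (𝓝 0))
    (hρ : ρ ≠ 0) :
    ∃ l, Tendsto (fun R => ∫ r in (0 : ℝ)..R, g r * sin (ρ * r)) atTop (𝓝 l) := by
  have hsin (b : ℝ) : IntervalIntegrable (fun r => sin (ρ * r)) volume a b :=
    Continuous.intervalIntegrable (by fun_prop) a b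
  obtain ⟨l, hl⟩ := exists_tendsto_integral_smul hg hg0 (fun b _ => hsin b)
    fun x y _ _ => abs_integral_sin_mul_le hρ x y
  refine ⟨(∫ r in (0 : ℝ)..a, g r * sin (ρ * r)) + l, (hl.const_add _).congr' ?_⟩
  filter_upwards [eventually_ge_atTop a] with R hR
  have hsub : uIcc a R ⊆ Ici a := uIcc_of_le hR ▸ Icc_subset_Ici_self
  exact intervalIntegral.integral_add_adjacent_intervals (intervalIntegrable_mul_sin hint ρ)
    (intervalIntegrable_smul_of_monotoneOn_or_antitoneOn
      (hg.imp (·.mono hsub) (·.mono hsub)) (hsin R))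

lemma abs_integral_mul_sin_le (ha : 0 ≤ a)
    (hint : IntervalIntegrable (fun r => r * g r) volume 0 a)
    (hg : MonotoneOn g (Ici a) ∨ AntitoneOn g (Ici a)) (hg0 : Tendsto g atTop (𝓝 0))
    (hρ : ρ ≠ 0) {R : ℝ} (hR : 0 ≤ R) :
    |∫ r in (0 : ℝ)..R, g r * sin (ρ * r)| ≤
      |ρ| * (∫ r in (0 : ℝ)..a, |r * g r|) + |g a| * (2 / |ρ|) := by
  have hnear {b : ℝ} (hb : 0 ≤ b) (hba : b ≤ a) :
      |∫ r in (0 : ℝ)..b, g r * sin (ρ * r)| ≤ |ρ| * ∫ r in (0 : ℝ)..a, |r * g r| := by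
    have hsub : uIcc 0 b ⊆ uIcc 0 a := uIcc_subset_uIcc_left (mem_uIcc_of_le hb hba)
    refine (abs_integral_mul_sin_le_mul_integral_abs hb (hint.mono_set hsub) ρ).trans ?_
    gcongr
    exact intervalIntegral.integral_mono_interval le_rfl hb hba
      (ae_of_all _ fun r => abs_nonneg _) hint.abs
  rcases le_total R a with hRa | haR
  · exact (hnear hR hRa).trans (le_add_of_nonneg_right (by positivity))
  · have hsin : IntervalIntegrable (fun r => sin (ρ * r)) volume a R :=
      Continuous.intervalIntegrable (by fun_prop) a R
    have hsub : uIcc a R ⊆ Ici a := uIcc_of_le haR ▸ Icc_subset_Ici_self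
    have htail : |∫ r in a..R, g r * sin (ρ * r)| ≤ |g a| * (2 / |ρ|) :=
      norm_integral_smul_le_of_tendsto_zero hg hg0 haR hsin
        fun x _ => abs_integral_sin_mul_le hρ a x
    rw [← intervalIntegral.integral_add_adjacent_intervals (intervalIntegrable_mul_sin hint ρ)
      (intervalIntegrable_smul_of_monotoneOn_or_antitoneOn
        (hg.imp (·.mono hsub) (·.mono hsub)) hsin)]
    exact (abs_add_le _ _).trans (add_le_add (hnear ha le_rfl) htail)

lemma abs_const_mul_integral_mul_sin_le (ha : 0 ≤ a)
    (hint : IntervalIntegrable (fun r => r * g r) volume 0 a)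
    (hg : MonotoneOn g (Ici a) ∨ AntitoneOn g (Ici a)) (hg0 : Tendsto g atTop (𝓝 0))
    (hρ : 0 < ρ) {R : ℝ} (hR : 0 ≤ R) :
    |1 / (2 * π ^ 2 * ρ) * ∫ r in (0 : ℝ)..R, g r * sin (ρ * r)| ≤
      ((∫ r in (0 : ℝ)..a, |r * g r|) + |g a|) * (1 + 1 / ρ ^ 2) := by
  have hI := abs_integral_mul_sin_le ha hint hg hg0 hρ.ne' hR
  rw [abs_of_pos hρ] at hI
  set A := ∫ r in (0 : ℝ)..a, |r * g r|
  have hA : 0 ≤ A := intervalIntegral.integral_nonneg ha fun r _ => abs_nonneg _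
  have hπ : 1 ≤ π ^ 2 := one_le_pow₀ (one_le_two.trans two_le_pi)
  rw [abs_mul, abs_of_pos (by positivity)]
  calc 1 / (2 * π ^ 2 * ρ) * |∫ r in (0 : ℝ)..R, g r * sin (ρ * r)|
      ≤ 1 / (2 * π ^ 2 * ρ) * (ρ * A + |g a| * (2 / ρ)) := by gcongr
    _ ≤ 1 / (2 * 1 * ρ) * (ρ * A + |g a| * (2 / ρ)) := by gcongr
    _ = A / 2 + |g a| / ρ ^ 2 := by field_simp
    _ ≤ A + |g a| / ρ ^ 2 + (A / ρ ^ 2 + |g a|) := by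
        linarith [half_le_self hA, show 0 ≤ A / ρ ^ 2 + |g a| by positivity]
    _ = (A + |g a|) * (1 + 1 / ρ ^ 2) := by ring

end SineIntegral

section Decay

open Set
open scoped ENNReal

lemma frequently_norm_lt_of_memLp_Ioi {E : Type*} [NormedAddCommGroup E] {f : ℝ → E} {p : ℝ≥0∞}
    {a ε : ℝ} (hf : MemLp f p (volume.restrict (Ioi a))) (hp₀ : p ≠ 0) (hp : p ≠ ∞)
    (hε : 0 < ε) : ∃ᶠ r in atTop, ‖f r‖ < ε := by
  intro hlarge
  obtain ⟨x, hx⟩ := eventually_atTop.1 hlarge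
  have hfin := hf.meas_ge_lt_top'_enorm hp₀ hp (ε := ENNReal.ofReal ε) (by simpa) (by simp)
  refine hfin.not_ge ?_
  calc ∞ = volume.restrict (Ioi a) (Ioi (max a x)) := by
        rw [Measure.restrict_eq_self _ (Ioi_subset_Ioi (le_max_left a x)), volume_Ioi]
    _ ≤ _ := measure_mono fun r hr => by
        rw [mem_ofPred_eq, ← ofReal_norm]
        exact ENNReal.ofReal_le_ofReal (not_lt.1 (hx r (max_lt_iff.1 hr).2.le))

lemma tendsto_zero_of_memLp_Ioi {g : ℝ → ℝ} {p : ℝ≥0∞} {a : ℝ}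
    (hg : MonotoneOn g (Ioi a) ∨ AntitoneOn g (Ioi a))
    (hLp : MemLp g p (volume.restrict (Ioi a))) (hp₀ : p ≠ 0) (hp : p ≠ ∞) :
    Tendsto g atTop (𝓝 0) := by
  refine Metric.tendsto_atTop.2 fun ε hε => ?_
  have hsmall := frequently_norm_lt_of_memLp_Ioi hLp hp₀ hp hε
  obtain ⟨x, hxε, hax⟩ := (hsmall.and_eventually (eventually_gt_atTop a)).exists
  refine ⟨x, fun r hxr => ?_⟩
  obtain ⟨y, hyε, hry⟩ := (hsmall.and_eventually (eventually_ge_atTop r)).exists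
  have har : a < r := hax.trans_le hxr
  rw [Real.norm_eq_abs, abs_lt] at hxε hyε
  rw [Real.dist_0_eq_abs, abs_lt]
  rcases hg with hg | hg
  · exact ⟨hxε.1.trans_le (hg hax har hxr), (hg har (har.trans_le hry) hry).trans_lt hyε.2⟩
  · exact ⟨hyε.1.trans_le (hg har (har.trans_le hry) hry), (hg hax har hxr).trans_lt hxε.2⟩

lemma integrable_mul_of_integrable_mul_sq {α : Type*} [MeasurableSpace α] {μ : Measure α}
    {w g : α → ℝ} (hw : Integrable w μ) (hg : AEStronglyMeasurable g μ)
    (hwg : Integrable (fun x => w x * g x ^ 2) μ) : Integrable (fun x => w x * g x) μ := by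
  refine (hw.norm.add hwg.norm).mono' (hw.aestronglyMeasurable.mul hg) (ae_of_all _ fun x => ?_)
  have hg_le : |g x| ≤ 1 + g x ^ 2 := by nlinarith [sq_abs (g x), sq_nonneg (|g x| - 1)]
  calc ‖w x * g x‖ = |w x| * |g x| := abs_mul _ _
    _ ≤ |w x| * (1 + g x ^ 2) := by gcongr
    _ = ‖w x‖ + ‖w x * g x ^ 2‖ := by
      rw [norm_mul, Real.norm_of_nonneg (sq_nonneg (g x)), mul_add, mul_one, Real.norm_eq_abs]

lemma tendsto_zero_of_integrableOn_mul_sq {g : ℝ → ℝ} {a : ℝ}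
    (hg : MonotoneOn g (Ioi a) ∨ AntitoneOn g (Ioi a))
    (hint : IntegrableOn (fun r => r * g r ^ 2) (Ioi a)) : Tendsto g atTop (𝓝 0) := by
  have hsub : Ioi (max a 1) ⊆ Ioi a := Ioi_subset_Ioi (le_max_left a 1)
  have hg' := hg.imp (·.mono hsub) (·.mono hsub)
  have hmeas : AEStronglyMeasurable g (volume.restrict (Ioi (max a 1))) :=
    (hg'.elim (aemeasurable_restrict_of_monotoneOn measurableSet_Ioi)
      (aemeasurable_restrict_of_antitoneOn measurableSet_Ioi)).aestronglyMeasurable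
  refine tendsto_zero_of_memLp_Ioi hg' ((memLp_two_iff_integrable_sq hmeas).2 ?_)
    two_ne_zero ENNReal.ofNat_ne_top
  refine (hint.mono_set hsub).mono' (hmeas.pow 2) ?_
  filter_upwards [ae_restrict_mem measurableSet_Ioi] with r hr
  rw [Real.norm_of_nonneg (sq_nonneg (g r))]
  exact le_mul_of_one_le_left (sq_nonneg _) ((le_max_right a 1).trans hr.le)

end Decay

theorem stmt12_general {φh : ℝ → ℝ}
    (hmeas : AEStronglyMeasurable φh (volume.restrict (Set.Ioi 0)))
    (hint : IntegrableOn (fun r => r ^ 3 * φh r ^ 2) (Set.Ioi 0)) {r₀ : ℝ}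
    (hmono : MonotoneOn (fun r => r * φh r) (Set.Ioi r₀) ∨
      AntitoneOn (fun r => r * φh r) (Set.Ioi r₀)) :
    ∃ φfun : ℝ → ℝ,
      (∀ ρ : ℝ, 0 < ρ →
        Tendsto (fun R => 1 / (2 * π ^ 2 * ρ) * ∫ r in (0 : ℝ)..R, r * φh r * sin (ρ * r))
          atTop (𝓝 (φfun ρ))) ∧
      ∃ C : ℝ, 0 < C ∧
        (∀ ρ R : ℝ, 0 < ρ → 0 < R →
          |1 / (2 * π ^ 2 * ρ) * ∫ r in (0 : ℝ)..R, r * φh r * sin (ρ * r)| ≤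
            C * (1 + 1 / ρ ^ 2)) ∧
        (∀ ρ : ℝ, 0 < ρ → |φfun ρ| ≤ C * (1 + 1 / ρ ^ 2)) := by
  set g : ℝ → ℝ := fun r => r * φh r
  obtain ⟨a, ha0, har⟩ : ∃ a, 0 ≤ a ∧ r₀ < a := ⟨max 0 (r₀ + 1), by simp, by simp⟩
  have hsub : Set.Ici a ⊆ Set.Ioi r₀ := Set.Ici_subset_Ioi.2 har
  have hga := hmono.imp (·.mono hsub) (·.mono hsub)
  have hint' : IntegrableOn (fun r => r * g r ^ 2) (Set.Ioi 0) := by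
    simpa only [g, mul_pow, ← mul_assoc, ← pow_succ'] using hint
  have hg0 : Tendsto g atTop (𝓝 0) := tendsto_zero_of_integrableOn_mul_sq
    (hga.imp (·.mono Set.Ioi_subset_Ici_self) (·.mono Set.Ioi_subset_Ici_self))
    (hint'.mono_set (Set.Ioi_subset_Ioi ha0))
  have hnear : IntervalIntegrable (fun r => r * g r) volume 0 a := by
    have hIoc : Set.Ioc 0 a ⊆ Set.Ioi 0 := Set.Ioc_subset_Ioi_self
    refine (intervalIntegrable_iff_integrableOn_Ioc_of_le ha0).2 ?_
    exact integrable_mul_of_integrable_mul_sq continuous_id.integrableOn_Ioc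
      (aestronglyMeasurable_id.mul (hmeas.mono_set hIoc)) (hint'.mono_set hIoc)
  choose! l hl using fun ρ (hρ : 0 < ρ) => exists_tendsto_integral_mul_sin hnear hga hg0 hρ.ne'
  have hlim (ρ : ℝ) (hρ : 0 < ρ) := (hl ρ hρ).const_mul (1 / (2 * π ^ 2 * ρ))
  set C := (∫ r in (0 : ℝ)..a, |r * g r|) + |g a|
  have hC : 0 ≤ C := add_nonneg
    (intervalIntegral.integral_nonneg ha0 fun r _ => abs_nonneg _) (abs_nonneg _)
  have hbound (ρ R : ℝ) (hρ : 0 < ρ) (hR : 0 < R) :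
      |1 / (2 * π ^ 2 * ρ) * ∫ r in (0 : ℝ)..R, g r * sin (ρ * r)| ≤
        (C + 1) * (1 + 1 / ρ ^ 2) :=
    (abs_const_mul_integral_mul_sin_le ha0 hnear hga hg0 hρ hR.le).trans <|
      mul_le_mul_of_nonneg_right (le_add_of_nonneg_right zero_le_one) (by positivity)
  refine ⟨_, hlim, C + 1, by positivity, hbound, fun ρ hρ => le_of_tendsto (hlim ρ hρ).abs ?_⟩
  filter_upwards [eventually_gt_atTop 0] with R hR using hbound ρ R hρ hR

/-- If `φ̂` is Borel measurable with `∫₀^∞ r³ φ̂(r)² dr = 1/(2π)` and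
`r ↦ r φ̂(r)` is monotone on `(r₀, ∞)` for some `r₀ ≥ 0`, then for every `ρ > 0` the limit
`φ(ρ) = lim_{R→∞} (1/(2π²ρ)) ∫₀^R r φ̂(r) sin(ρr) dr` exists, and there is `0 < C < ∞` with
`sup_{R>0} |(1/(2π²ρ)) ∫₀^R r φ̂(r) sin(ρr) dr| ≤ C(1+ρ⁻²)` and `|φ(ρ)| ≤ C(1+ρ⁻²)` for all
`ρ > 0`. -/
theorem stmt12 (φh : ℝ → ℝ) (hmeas : Measurable φh)
    (hnorm : ∫ r in Set.Ioi (0 : ℝ), r ^ 3 * (φh r) ^ 2 = 1 / (2 * π))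
    (r₀ : ℝ) (hr₀ : 0 ≤ r₀)
    (hmono : MonotoneOn (fun r => r * φh r) (Set.Ioi r₀) ∨
      AntitoneOn (fun r => r * φh r) (Set.Ioi r₀)) :
    ∃ φfun : ℝ → ℝ,
      (∀ ρ : ℝ, 0 < ρ →
        Tendsto (fun R => (1 / (2 * π ^ 2 * ρ)) * ∫ r in (0 : ℝ)..R, r * φh r * Real.sin (ρ * r))
          atTop (𝓝 (φfun ρ))) ∧
      ∃ C : ℝ, 0 < C ∧
        (∀ ρ R : ℝ, 0 < ρ → 0 < R →
          |(1 / (2 * π ^ 2 * ρ)) * ∫ r in (0 : ℝ)..R, r * φh r * Real.sin (ρ * r)| ≤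
            C * (1 + 1 / ρ ^ 2)) ∧
        (∀ ρ : ℝ, 0 < ρ → |φfun ρ| ≤ C * (1 + 1 / ρ ^ 2)) :=
  stmt12_general hmeas.aestronglyMeasurable
    (Integrable.of_integral_ne_zero (by rw [hnorm]; positivity)) hmono
end

section
/- Let φ̂ : [0,∞) → ℝ be Borel measurable with ∫₀^∞ r³ φ̂(r)² dr = 1/(2π), and suppose there exists r₀ ≥ 0 such that r ↦ r φ̂(r) is monotone on (r₀, ∞). Let φ(ρ) := lim_{R→∞} (1/(2π²ρ)) ∫₀^R r φ̂(r) sin(ρ r) dr for ρ > 0. Then for every Schwartz function ψ on ℝ³, the functions ξ ↦ φ̂(|ξ|) ψ(ξ) and x ↦ φ(|x|) ψ̂(x) are Lebesgue integrable on ℝ³ and ∫_{ℝ³} φ̂(|ξ|) ψ(ξ) dξ = ∫_{ℝ³} φ(|x|) ψ̂(x) dx, where ψ̂(x) := ∫_{ℝ³} ψ(ξ) e^{−i x·ξ} dξ. -/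
/-!
The finite weighted integral gives `∫ |ξ| |φ̂(|ξ|)|² dξ < ∞` on `ℝ³`. On the unit ball this makes
`f(ξ) = φ̂(|ξ|)` integrable, because `2 |f| ≤ |ξ| |f|² + |ξ|⁻¹`; off the unit ball it makes `f`
square integrable. So `f = f₁ + f₂` with `f₁ ∈ L¹` and `f₂ ∈ L²`, and the Fourier transforms of
the truncations of `f` to balls of radius `n` converge pointwise on the `f₁` part and, by
Plancherel, in `L²` on the `f₂` part, hence almost everywhere along a subsequence. A pointwise
limit of these transforms must therefore agree almost everywhere with `𝓕 f₁ + 𝓕 f₂`, for which the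
duality with Schwartz functions holds.

Projecting a sphere of `ℝ³` onto a line gives a uniform distribution, so the Fourier transform of a
truncation is a sine integral, and its limit is `φ`. The normalisation `e^{-2πi y·ξ}` of `𝓕` is
matched by the dilation `x = -2π y`.
-/

open MeasureTheory Real Filter
open scoped Topology RealInnerProductSpace

noncomputable section

/-- `ψ̂(x) = ∫_{ℝ³} ψ(ξ) e^{−i x·ξ} dξ`. -/
noncomputable def fourierInt (ψ : SchwartzMap E3 ℂ) (x : E3) : ℂ :=
  ∫ ξ : E3, ψ ξ * Complex.exp (-(Complex.I * (⟪x, ξ⟫ : ℝ)))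

open FourierTransform SchwartzMap
open scoped ENNReal

section Truncation

variable {α F : Type*} [MeasurableSpace α] {μ : Measure α} [NormedAddCommGroup F]

lemma tendsto_eLpNorm_indicator_sub_of_aecover {s : ℕ → Set α} (hs : AECover μ atTop s)
    {p : ℝ≥0∞} (hp : p ≠ ∞) {f : α → F} (hf : MemLp f p μ) :
    Tendsto (fun n => eLpNorm ((s n).indicator f - f) p μ) atTop (𝓝 0) := by
  obtain rfl | hp₀ := eq_or_ne p 0
  · simp
  have hpos : 0 < p.toReal := ENNReal.toReal_pos hp₀ hp
  have hlim : Tendsto (fun n => ∫⁻ x, ‖((s n).indicator f - f) x‖ₑ ^ p.toReal ∂μ) atTop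
      (𝓝 (∫⁻ _, 0 ∂μ)) := by
    refine tendsto_lintegral_of_dominated_convergence' (fun x => ‖f x‖ₑ ^ p.toReal)
      (fun n => ((hf.1.indicator (hs.measurableSet n)).sub hf.1).enorm.pow_const _)
      (fun n => .of_forall fun x => ?_)
      ((lintegral_rpow_enorm_lt_top_of_eLpNorm_lt_top hp₀ hp hf.2).ne) ?_
    · refine ENNReal.rpow_le_rpow ?_ hpos.le
      by_cases hx : x ∈ s n <;> simp [hx]
    · filter_upwards [hs.ae_eventually_mem] with x hx
      refine tendsto_const_nhds.congr' ?_
      filter_upwards [hx] with n hn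
      simp [hn, hpos]
  simp_rw [eLpNorm_eq_lintegral_rpow_enorm_toReal hp₀ hp]
  simpa [hpos] using hlim.ennrpow_const (1 / p.toReal)

end Truncation

section FourierOfSum

variable {V F : Type*} [NormedAddCommGroup V] [InnerProductSpace ℝ V] [FiniteDimensional ℝ V]
  [MeasurableSpace V] [BorelSpace V]

section NormedSpace

variable [NormedAddCommGroup F] [NormedSpace ℂ F] {f : V → F}

lemma continuous_fourier_of_integrable (hf : Integrable f) : Continuous (𝓕 f) :=
  VectorFourier.fourierIntegral_continuous Real.continuous_fourierChar (L := innerₗ V)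
    continuous_inner hf

lemma tendsto_fourier_indicator_of_aecover {s : ℕ → Set V} (hs : AECover volume atTop s)
    (hf : Integrable f) (y : V) :
    Tendsto (fun n => 𝓕 ((s n).indicator f) y) atTop (𝓝 (𝓕 f y)) := by
  have hint : Integrable fun ξ => 𝐞 (-⟪ξ, y⟫) • f ξ :=
    (Real.fourierIntegral_convergent_iff y).2 hf
  refine (hs.integral_tendsto_of_countably_generated hint).congr fun n => ?_
  rw [Real.fourier_eq, ← integral_indicator (hs.measurableSet n)]
  congr 1 with ξ
  by_cases hξ : ξ ∈ s n <;> simp [hξ]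

lemma integral_fourier_smul_eq_of_integrable [CompleteSpace F] (hf : Integrable f) (η : 𝓢(V, ℂ)) :
    ∫ ξ, 𝓕 η ξ • f ξ = ∫ y, η y • 𝓕 f y := by
  have h := VectorFourier.integral_fourierIntegral_smul_eq_flip (L := innerₗ V) (μ := volume)
    (ν := volume) Real.continuous_fourierChar continuous_inner η.integrable hf
  rwa [flip_innerₗ] at h

end NormedSpace

variable [NormedAddCommGroup F] [InnerProductSpace ℂ F] [CompleteSpace F] {f : V → F}

lemma integral_fourier_smul_eq_of_memLp_two (hf : MemLp f 2) (η : 𝓢(V, ℂ)) :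
    ∫ ξ, 𝓕 η ξ • f ξ = ∫ y, η y • (𝓕 (hf.toLp f) : Lp F 2 (volume : Measure V)) y := by
  have h : ∫ ξ, 𝓕 η ξ • hf.toLp f ξ = ∫ y, η y • 𝓕 (hf.toLp f) y := by
    simpa [TemperedDistribution.fourier_apply, Lp.toTemperedDistribution_apply]
      using congr($(Lp.fourier_toTemperedDistribution_eq (hf.toLp f)) η)
  rw [← h]
  refine integral_congr_ae ?_
  filter_upwards [hf.coeFn_toLp] with ξ hξ
  rw [hξ]

lemma fourier_toLp_ae_eq (hf₁ : Integrable f) (hf₂ : MemLp f 2) :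
    (𝓕 (hf₂.toLp f) : Lp F 2 (volume : Measure V)) =ᵐ[volume] 𝓕 f := by
  refine ae_eq_of_integral_contDiff_smul_eq
    ((Lp.memLp _).locallyIntegrable one_le_two)
    (continuous_fourier_of_integrable hf₁).locallyIntegrable fun u hu hsupp => ?_
  have husupp : HasCompactSupport (Complex.ofRealCLM ∘ u) := hsupp.comp_left rfl
  let η : 𝓢(V, ℂ) := husupp.toSchwartzMap (by fun_prop)
  have hη : ∀ h : V → F, ∫ y, u y • h y = ∫ y, η y • h y := fun h => by simp [η]
  rw [hη, hη, ← integral_fourier_smul_eq_of_memLp_two, ← integral_fourier_smul_eq_of_integrable hf₁]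

lemma exists_subseq_tendsto_fourier_indicator_of_memLp_two {s : ℕ → Set V}
    (hs : AECover volume atTop s) (hf : MemLp f 2) (hint : ∀ n, IntegrableOn f (s n)) :
    ∃ k : ℕ → ℕ, StrictMono k ∧
      ∀ᵐ y, Tendsto (fun n => 𝓕 ((s (k n)).indicator f) y) atTop
        (𝓝 ((𝓕 (hf.toLp f) : Lp F 2 (volume : Measure V)) y)) := by
  have hmem : ∀ n, MemLp ((s n).indicator f) 2 := fun n => hf.indicator (hs.measurableSet n)
  have hlim : Tendsto (fun n => (hmem n).toLp) atTop (𝓝 (hf.toLp f)) :=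
    (Lp.tendsto_Lp_iff_tendsto_eLpNorm'' _ hmem f hf).2
      (tendsto_eLpNorm_indicator_sub_of_aecover hs ENNReal.ofNat_ne_top hf)
  have hplancherel : Tendsto (fun n => 𝓕 (hmem n).toLp) atTop (𝓝 (𝓕 (hf.toLp f))) :=
    (continuous_fourier.tendsto _).comp hlim
  obtain ⟨k, hk, hkt⟩ := (tendstoInMeasure_of_tendsto_Lp hplancherel).exists_seq_tendsto_ae
  refine ⟨k, hk, ?_⟩
  filter_upwards [hkt, ae_all_iff.2 fun n =>
    fourier_toLp_ae_eq ((hint n).integrable_indicator (hs.measurableSet n)) (hmem n)] with y hy hF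
  exact hy.congr fun n => hF (k n)

variable {f₁ f₂ g : V → F}

lemma ae_eq_of_tendsto_fourier_indicator_add {s : ℕ → Set V} (hs : AECover volume atTop s)
    (hf₁ : Integrable f₁) (hf₂ : MemLp f₂ 2) (hint : ∀ n, IntegrableOn f₂ (s n))
    (hg : ∀ᵐ y, Tendsto (fun n => 𝓕 ((s n).indicator (f₁ + f₂)) y) atTop (𝓝 (g y))) :
    g =ᵐ[volume] 𝓕 f₁ + (𝓕 (hf₂.toLp f₂) : Lp F 2 (volume : Measure V)) := by
  obtain ⟨k, hk, hlim₂⟩ := exists_subseq_tendsto_fourier_indicator_of_memLp_two hs hf₂ hint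
  filter_upwards [hg, hlim₂] with y hy hy₂
  have hlim₁ := (tendsto_fourier_indicator_of_aecover hs hf₁ y).comp hk.tendsto_atTop
  refine tendsto_nhds_unique (hy.comp hk.tendsto_atTop) ((hlim₁.add hy₂).congr fun n => ?_)
  have hsn := hs.measurableSet (k n)
  simp only [Function.comp_apply, Set.indicator_add']
  exact congrFun (VectorFourier.fourierIntegral_add (L := innerₗ V) Real.continuous_fourierChar
    continuous_inner (hf₁.indicator hsn) ((hint (k n)).integrable_indicator hsn)).symm y

lemma integral_fourier_smul_eq_of_tendsto_fourier_indicator_add {s : ℕ → Set V}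
    (hs : AECover volume atTop s) (hf₁ : Integrable f₁) (hf₂ : MemLp f₂ 2)
    (hint : ∀ n, IntegrableOn f₂ (s n))
    (hg : ∀ᵐ y, Tendsto (fun n => 𝓕 ((s n).indicator (f₁ + f₂)) y) atTop (𝓝 (g y)))
    (η : 𝓢(V, ℂ)) :
    Integrable (fun ξ => 𝓕 η ξ • (f₁ + f₂) ξ) ∧ Integrable (fun y => η y • g y) ∧
      ∫ ξ, 𝓕 η ξ • (f₁ + f₂) ξ = ∫ y, η y • g y := by
  set F₂ : Lp F 2 (volume : Measure V) := 𝓕 (hf₂.toLp f₂)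
  have hi₁ : Integrable fun ξ => 𝓕 η ξ • f₁ ξ :=
    hf₁.bdd_smul _ (𝓕 η).continuous.aestronglyMeasurable (.of_forall (norm_le_seminorm ℝ (𝓕 η)))
  have hi₂ : Integrable fun ξ => 𝓕 η ξ • f₂ ξ :=
    memLp_one_iff_integrable.1 (hf₂.smul ((𝓕 η).memLp 2))
  have hj₁ : Integrable fun y => η y • 𝓕 f₁ y :=
    η.integrable.smul_bdd _ (continuous_fourier_of_integrable hf₁).aestronglyMeasurable
      (.of_forall (VectorFourier.norm_fourierIntegral_le_integral_norm _ _ _ f₁))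
  have hj₂ : Integrable fun y => η y • F₂ y :=
    memLp_one_iff_integrable.1 ((Lp.memLp F₂).smul (η.memLp 2))
  have hgη : (fun y => η y • g y) =ᵐ[volume] fun y => η y • 𝓕 f₁ y + η y • F₂ y := by
    filter_upwards [ae_eq_of_tendsto_fourier_indicator_add hs hf₁ hf₂ hint hg] with y hy
    rw [hy, Pi.add_apply, smul_add]
  simp only [Pi.add_apply, smul_add]
  refine ⟨hi₁.add hi₂, (hj₁.add hj₂).congr hgη.symm, ?_⟩
  rw [integral_congr_ae hgη, integral_add hi₁ hi₂, integral_add hj₁ hj₂,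
    integral_fourier_smul_eq_of_integrable hf₁, integral_fourier_smul_eq_of_memLp_two hf₂]

end FourierOfSum

section Weighted

variable {V : Type*} [NormedAddCommGroup V] [InnerProductSpace ℝ V] [FiniteDimensional ℝ V]
  [MeasurableSpace V] [BorelSpace V]

lemma integrableOn_ball_norm_inv (hV : 1 < Module.finrank ℝ V) (R : ℝ) :
    IntegrableOn (fun ξ : V => ‖ξ‖⁻¹) (Metric.ball 0 R) := by
  have : Nontrivial V := Module.nontrivial_of_finrank_pos (R := ℝ) (by omega)
  rw [integrableOn_fun_norm_addHaar volume (f := fun r => r⁻¹)]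
  refine (((continuous_pow (Module.finrank ℝ V - 2)).integrableOn_Icc (a := 0) (b := R)).mono_set
    Set.Ioo_subset_Icc_self).congr_fun (fun r hr => ?_) measurableSet_Ioo
  obtain ⟨d, hd⟩ := Nat.exists_eq_add_of_le hV
  have hr : r ≠ 0 := hr.1.ne'
  simp [hd, add_comm, pow_succ, hr]

variable {F : Type*} [NormedAddCommGroup F]

lemma integrableOn_ball_of_integrable_norm_mul_sq (hV : 1 < Module.finrank ℝ V) {f : V → F}
    (hf : AEStronglyMeasurable f) (hint : Integrable fun ξ => ‖ξ‖ * ‖f ξ‖ ^ 2) (R : ℝ) :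
    IntegrableOn f (Metric.ball 0 R) := by
  refine (hint.integrableOn.add (integrableOn_ball_norm_inv hV R)).mono' hf.restrict
    (ae_restrict_of_ae ?_)
  have : Nontrivial V := Module.nontrivial_of_finrank_pos (R := ℝ) (by omega)
  filter_upwards [Measure.ae_ne volume (0 : V)] with ξ hξ
  have hξ' : ‖ξ‖ ≠ 0 := norm_ne_zero_iff.2 hξ
  -- AM-GM: `2 ‖f ξ‖ ≤ ‖ξ‖ * ‖f ξ‖ ^ 2 + ‖ξ‖⁻¹`
  have hsq : 0 ≤ ‖ξ‖ * (‖f ξ‖ - ‖ξ‖⁻¹) ^ 2 := by positivity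
  have hexp : ‖ξ‖ * (‖f ξ‖ - ‖ξ‖⁻¹) ^ 2 = ‖ξ‖ * ‖f ξ‖ ^ 2 + ‖ξ‖⁻¹ - 2 * ‖f ξ‖ := by
    field_simp
    ring
  rw [Pi.add_apply]
  linarith [norm_nonneg (f ξ)]

lemma memLp_two_indicator_compl_ball_of_integrable_norm_mul_sq {f : V → F}
    (hf : AEStronglyMeasurable f) (hint : Integrable fun ξ => ‖ξ‖ * ‖f ξ‖ ^ 2) :
    MemLp ((Metric.ball 0 1)ᶜ.indicator f) 2 := by
  have hm := hf.indicator (measurableSet_ball (x := (0 : V)) (ε := 1)).compl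
  refine (memLp_two_iff_integrable_sq_norm hm).2
    (hint.mono' (hm.norm.pow 2) (.of_forall fun ξ => ?_))
  by_cases hξ : ξ ∈ Metric.ball (0 : V) 1
  · simp only [Set.indicator, Set.mem_compl_iff, hξ, not_true_eq_false, if_false]
    simpa using by positivity
  · have h1 : 1 ≤ ‖ξ‖ := by simpa using hξ
    simp only [Set.indicator, Set.mem_compl_iff, hξ, not_false_eq_true, if_true, norm_pow,
      norm_norm]
    exact le_mul_of_one_le_left (by positivity) h1

theorem integral_fourier_smul_eq_of_tendsto_fourier_indicator_ball [InnerProductSpace ℂ F]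
    [CompleteSpace F] (hV : 1 < Module.finrank ℝ V) {f g : V → F} (hf : AEStronglyMeasurable f)
    (hint : Integrable fun ξ => ‖ξ‖ * ‖f ξ‖ ^ 2)
    (hg : ∀ᵐ y, Tendsto (fun n : ℕ => 𝓕 ((Metric.ball 0 (n : ℝ)).indicator f) y) atTop (𝓝 (g y)))
    (η : 𝓢(V, ℂ)) :
    Integrable (fun ξ => 𝓕 η ξ • f ξ) ∧ Integrable (fun y => η y • g y) ∧
      ∫ ξ, 𝓕 η ξ • f ξ = ∫ y, η y • g y := by
  have hball := integrableOn_ball_of_integrable_norm_mul_sq hV hf hint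
  have hsplit := Set.indicator_self_add_compl (Metric.ball 0 1) f
  rw [← hsplit] at hg ⊢
  exact integral_fourier_smul_eq_of_tendsto_fourier_indicator_add
    (aecover_ball tendsto_natCast_atTop_atTop) ((hball 1).integrable_indicator measurableSet_ball)
    (memLp_two_indicator_compl_ball_of_integrable_norm_mul_sq hf hint)
    (fun n => (hball n).indicator measurableSet_ball.compl) hg η

end Weighted

section RadialFourier

lemma image_sqrt_sq_add_sq_Ioi (s : ℝ) :
    (fun t => √(s ^ 2 + t ^ 2)) '' Set.Ioi 0 = Set.Ioi |s| := by
  ext r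
  simp only [Set.mem_image, Set.mem_Ioi]
  constructor
  · rintro ⟨t, ht, rfl⟩
    exact Real.lt_sqrt_of_sq_lt (by rw [sq_abs]; nlinarith)
  · intro hr
    have hr₀ : 0 < r := (abs_nonneg s).trans_lt hr
    have hlt : s ^ 2 < r ^ 2 := sq_lt_sq.2 (by rwa [abs_of_pos hr₀])
    refine ⟨√(r ^ 2 - s ^ 2), Real.sqrt_pos.2 (by linarith), ?_⟩
    rw [Real.sq_sqrt (by linarith), add_sub_cancel, Real.sqrt_sq hr₀.le]

lemma lintegral_Ioi_sqrt_sq_add_sq (G : ℝ → ℝ≥0∞) (s : ℝ) :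
    ∫⁻ t in Set.Ioi 0, ENNReal.ofReal t * G √(s ^ 2 + t ^ 2) =
      ∫⁻ r in Set.Ioi |s|, ENNReal.ofReal r * G r := by
  have hpos : ∀ t ∈ Set.Ioi (0 : ℝ), 0 < √(s ^ 2 + t ^ 2) := fun t ht =>
    Real.sqrt_pos.2 (add_pos_of_nonneg_of_pos (sq_nonneg s) (pow_pos ht 2))
  have hderiv : ∀ t ∈ Set.Ioi (0 : ℝ), HasDerivWithinAt (fun t => √(s ^ 2 + t ^ 2))
      (t / √(s ^ 2 + t ^ 2)) (Set.Ioi 0) t := fun t ht => by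
    have h := (((hasDerivAt_pow 2 t).const_add (s ^ 2)).sqrt
      (Real.sqrt_pos.1 (hpos t ht)).ne').hasDerivWithinAt (s := Set.Ioi 0)
    convert! h using 1
    push_cast
    field_simp
  have hinj : Set.InjOn (fun t => √(s ^ 2 + t ^ 2)) (Set.Ioi 0) := fun t ht u hu htu => by
    have hsq := (Real.sqrt_inj (by positivity) (by positivity)).1 htu
    exact (pow_left_inj₀ (le_of_lt ht) (le_of_lt hu) two_ne_zero).1 (by linarith)
  rw [← image_sqrt_sq_add_sq_Ioi, lintegral_image_eq_lintegral_abs_deriv_mul measurableSet_Ioi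
    hderiv hinj]
  refine setLIntegral_congr_fun measurableSet_Ioi fun t ht => ?_
  have hr := hpos t ht
  have ht : 0 < t := ht
  rw [← mul_assoc, ← ENNReal.ofReal_mul (abs_nonneg _), abs_of_pos (by positivity),
    div_mul_cancel₀ _ hr.ne']

lemma lintegral_comp_norm_complex {G : ℝ → ℝ≥0∞} (hG : Measurable G) :
    ∫⁻ z : ℂ, G ‖z‖ = ENNReal.ofReal (2 * π) * ∫⁻ t in Set.Ioi 0, ENNReal.ofReal t * G t := by
  rw [← Complex.lintegral_comp_polarCoord_symm, polarCoord_target, Measure.volume_eq_prod]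
  simp_rw [Complex.norm_polarCoord_symm]
  rw [setLIntegral_prod _ (by fun_prop), ← lintegral_const_mul _ (by fun_prop)]
  refine setLIntegral_congr_fun measurableSet_Ioi fun t ht => ?_
  have ht : 0 < t := ht
  simp only [abs_of_pos ht, smul_eq_mul, lintegral_const,
    Measure.restrict_apply_univ, Real.volume_Ioo, sub_neg_eq_add, ← two_mul]
  exact mul_comm _ _

lemma lintegral_comp_sqrt_sq_add_norm_sq {G : ℝ → ℝ≥0∞} (hG : Measurable G) (s : ℝ) :
    ∫⁻ z : ℂ, G √(s ^ 2 + ‖z‖ ^ 2) =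
      ∫⁻ r in Set.Ioi |s|, ENNReal.ofReal (2 * π * r) * G r := by
  rw [lintegral_comp_norm_complex (G := fun t => G √(s ^ 2 + t ^ 2)) (by fun_prop),
    lintegral_Ioi_sqrt_sq_add_sq, ← lintegral_const_mul _ (by fun_prop)]
  simp_rw [ENNReal.ofReal_mul two_pi_pos.le, mul_assoc]

variable {V : Type*} [NormedAddCommGroup V] [InnerProductSpace ℝ V] [FiniteDimensional ℝ V]

lemma exists_linearIsometryEquiv_apply_eq_toLp (hV : Module.finrank ℝ V = 3) {e : V}
    (he : ‖e‖ = 1) :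
    ∃ A : V ≃ₗᵢ[ℝ] WithLp 2 (ℝ × ℂ), A e = WithLp.toLp 2 (1, 0) := by
  have hdim : Module.finrank ℝ V = Module.finrank ℝ (WithLp 2 (ℝ × ℂ)) := by
    simp [(WithLp.linearEquiv 2 ℝ (ℝ × ℂ)).finrank_eq, hV]
  let B : V ≃ₗᵢ[ℝ] WithLp 2 (ℝ × ℂ) :=
    ((stdOrthonormalBasis ℝ V).reindex (finCongr hdim)).repr.trans
      (stdOrthonormalBasis ℝ (WithLp 2 (ℝ × ℂ))).repr.symm
  have hnorm : ‖B e‖ = ‖(WithLp.toLp 2 (1, 0) : WithLp 2 (ℝ × ℂ))‖ := by simp [he]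
  exact ⟨B.trans (Submodule.reflection (ℝ ∙ (B e - WithLp.toLp 2 (1, 0)))ᗮ),
    Submodule.reflection_sub hnorm⟩

variable [MeasurableSpace V] [BorelSpace V]

lemma lintegral_comp_inner_norm_eq_prod (hV : Module.finrank ℝ V = 3) {e : V} (he : ‖e‖ = 1)
    (G : ℝ × ℝ → ℝ≥0∞) :
    ∫⁻ ξ : V, G (⟪e, ξ⟫, ‖ξ‖) = ∫⁻ p : ℝ × ℂ, G (p.1, √(p.1 ^ 2 + ‖p.2‖ ^ 2)) := by
  obtain ⟨A, hA⟩ := exists_linearIsometryEquiv_apply_eq_toLp hV he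
  rw [← (WithLp.volume_preserving_ofLp ℝ ℂ).lintegral_comp_emb
    (MeasurableEquiv.toLp 2 (ℝ × ℂ)).symm.measurableEmbedding,
    ← A.measurePreserving.lintegral_comp_emb A.toHomeomorph.measurableEmbedding]
  congr 1 with ξ
  rw [← A.norm_map ξ, ← A.inner_map_map e ξ, hA, WithLp.prod_norm_eq_of_L2]
  simp [WithLp.prod_inner_apply]

/- Archimedes' hat-box theorem: on each sphere in a three-dimensional space, `⟪e, ξ⟫` is uniformly
distributed. -/
lemma map_inner_norm_volume_of_finrank_eq_three (hV : Module.finrank ℝ V = 3) {e : V}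
    (he : ‖e‖ = 1) :
    Measure.map (fun ξ : V => (⟪e, ξ⟫, ‖ξ‖)) volume =
      (volume.restrict {p : ℝ × ℝ | |p.1| < p.2}).withDensity
        fun p => ENNReal.ofReal (2 * π * p.2) := by
  have hT : MeasurableSet {p : ℝ × ℝ | |p.1| < p.2} := measurableSet_lt (by fun_prop) (by fun_prop)
  refine Measure.ext_of_lintegral _ fun G hG => ?_
  rw [lintegral_map hG (by fun_prop), lintegral_comp_inner_norm_eq_prod hV he,
    lintegral_withDensity_eq_lintegral_mul _ (by fun_prop) hG, ← lintegral_indicator hT,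
    Measure.volume_eq_prod, Measure.volume_eq_prod, lintegral_prod _ (by fun_prop),
    lintegral_prod _ (Measurable.aemeasurable (.indicator (by fun_prop) hT))]
  congr 1 with s
  rw [lintegral_comp_sqrt_sq_add_norm_sq (G := fun r => G (s, r)) (by fun_prop),
    ← lintegral_indicator measurableSet_Ioi]
  rfl

variable {F : Type*} [NormedAddCommGroup F]

lemma integral_comp_inner_norm_of_finrank_eq_three [NormedSpace ℝ F]
    (hV : Module.finrank ℝ V = 3) {e : V} (he : ‖e‖ = 1) {G : ℝ × ℝ → F} (hG : StronglyMeasurable G)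
    (hint : Integrable fun ξ : V => G (⟪e, ξ⟫, ‖ξ‖)) :
    ∫ ξ : V, G (⟪e, ξ⟫, ‖ξ‖) = ∫ r in Set.Ioi 0, (2 * π * r) • ∫ s in (-r)..r, G (s, r) := by
  have hT : MeasurableSet {p : ℝ × ℝ | |p.1| < p.2} := measurableSet_lt (by fun_prop) (by fun_prop)
  have hρ : Measurable fun p : ℝ × ℝ => ENNReal.ofReal (2 * π * p.2) := by fun_prop
  have hΦ : AEMeasurable (fun ξ : V => (⟪e, ξ⟫, ‖ξ‖)) := by fun_prop
  have hmap := map_inner_norm_volume_of_finrank_eq_three hV he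
  have hint' := (integrable_map_measure hG.aestronglyMeasurable hΦ).2 hint
  rw [← integral_map hΦ hG.aestronglyMeasurable]
  rw [hmap] at hint' ⊢
  rw [integrable_withDensity_iff_integrable_smul' hρ (by simp), ← IntegrableOn,
    ← integrable_indicator_iff hT] at hint'
  rw [integral_withDensity_eq_integral_toReal_smul hρ (by simp), ← integral_indicator hT,
    Measure.volume_eq_prod, integral_prod_symm _ hint', ← integral_indicator measurableSet_Ioi]
  congr 1 with r
  have hslice : (fun s => Set.indicator {p : ℝ × ℝ | |p.1| < p.2}
      (fun p => (ENNReal.ofReal (2 * π * p.2)).toReal • G p) (s, r)) =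
      (Set.Ioo (-r) r).indicator fun s => (ENNReal.ofReal (2 * π * r)).toReal • G (s, r) := by
    ext s
    simp [Set.indicator, abs_lt]
  rw [hslice, integral_indicator measurableSet_Ioo, integral_smul]
  obtain hr | hr := le_or_gt r 0
  · simp [hr.not_gt]
  · rw [Set.indicator_of_mem (Set.mem_Ioi.2 hr), ENNReal.toReal_ofReal (by positivity),
      intervalIntegral.integral_of_le (by linarith), integral_Ioc_eq_integral_Ioo]

lemma integral_exp_neg_two_pi_mul_I_symm {ρ : ℝ} (hρ : ρ ≠ 0) (r : ℝ) :
    ∫ s in (-r)..r, Complex.exp (-2 * π * (ρ * s : ℝ) * Complex.I) =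
      Real.sin (2 * π * ρ * r) / (π * ρ) := by
  have hρ' : (ρ : ℂ) ≠ 0 := by simp [hρ]
  have hπ : (π : ℂ) ≠ 0 := by simp [Real.pi_ne_zero]
  have hc : -2 * π * ρ * Complex.I ≠ 0 := by simp [hρ, Real.pi_ne_zero]
  have hexp (s : ℝ) : -2 * π * (ρ * s : ℝ) * Complex.I = -2 * π * ρ * Complex.I * s := by
    push_cast
    ring
  simp_rw [hexp]
  rw [integral_exp_mul_complex hc]
  push_cast
  rw [Complex.sin]
  field_simp
  rw [Complex.I_sq]
  ring_nf

variable [NormedSpace ℂ F] [CompleteSpace F] {f : ℝ → F} {y : V}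

lemma fourier_comp_norm_of_finrank_eq_three (hV : Module.finrank ℝ V = 3)
    (hf : StronglyMeasurable f) (hint : Integrable fun ξ : V => f ‖ξ‖) (hy : y ≠ 0) :
    𝓕 (fun ξ : V => f ‖ξ‖) y =
      (2 / ‖y‖) • ∫ r in Set.Ioi 0, (r * Real.sin (2 * π * ‖y‖ * r)) • f r := by
  have hρ : ‖y‖ ≠ 0 := norm_ne_zero_iff.2 hy
  let G : ℝ × ℝ → F := fun p => Complex.exp (-2 * π * (‖y‖ * p.1 : ℝ) * Complex.I) • f p.2
  have hGm : StronglyMeasurable G :=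
    (Measurable.stronglyMeasurable (by fun_prop)).smul (hf.comp_measurable measurable_snd)
  have he : ‖‖y‖⁻¹ • y‖ = 1 := norm_smul_inv_norm hy
  have hinner (ξ : V) : ‖y‖ * ⟪‖y‖⁻¹ • y, ξ⟫ = ⟪ξ, y⟫ := by
    rw [real_inner_smul_left, mul_inv_cancel_left₀ hρ, real_inner_comm]
  have hG : (fun ξ : V => 𝐞 (-⟪ξ, y⟫) • f ‖ξ‖) = fun ξ => G (⟪‖y‖⁻¹ • y, ξ⟫, ‖ξ‖) := by
    ext ξ
    simp only [G, hinner, Circle.smul_def, Real.fourierChar_apply]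
    push_cast
    ring_nf
  have hGint := (Real.fourierIntegral_convergent_iff y).2 hint
  rw [hG] at hGint
  rw [Real.fourier_eq, hG, integral_comp_inner_norm_of_finrank_eq_three hV he hGm hGint,
    ← integral_smul]
  congr 1 with r
  simp only [G]
  rw [intervalIntegral.integral_smul_const, integral_exp_neg_two_pi_mul_I_symm hρ,
    ← Complex.ofReal_mul, ← Complex.ofReal_div, Complex.coe_smul, smul_smul, smul_smul]
  congr 1
  field_simp

lemma fourier_indicator_ball_comp_norm_of_finrank_eq_three (hV : Module.finrank ℝ V = 3)
    (hf : StronglyMeasurable f) {R : ℝ} (hR : 0 ≤ R)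
    (hint : IntegrableOn (fun ξ : V => f ‖ξ‖) (Metric.ball 0 R)) (hy : y ≠ 0) :
    𝓕 ((Metric.ball 0 R).indicator fun ξ : V => f ‖ξ‖) y =
      (2 / ‖y‖) • ∫ r in 0..R, (r * Real.sin (2 * π * ‖y‖ * r)) • f r := by
  have hball : (Metric.ball 0 R).indicator (fun ξ : V => f ‖ξ‖) =
      fun ξ => (Set.Iio R).indicator f ‖ξ‖ := by
    ext ξ
    simp [Set.indicator]
  rw [← integrable_indicator_iff measurableSet_ball, hball] at hint
  rw [hball, fourier_comp_norm_of_finrank_eq_three hV (hf.indicator measurableSet_Iio) hint hy,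
    intervalIntegral.integral_of_le hR, integral_Ioc_eq_integral_Ioo, ← Set.Ioi_inter_Iio,
    ← setIntegral_indicator measurableSet_Iio]
  congr 3 with r
  exact (Set.indicator_smul_apply _ (fun r => r * Real.sin (2 * π * ‖y‖ * r)) f r).symm

end RadialFourier

section ThreeSpace

/- The sign of the dilation turns the negative exponent of `fourierInt` into the positive one of
`𝓕⁻`. -/
lemma fourierInt_neg_two_pi_smul (ψ : 𝓢(E3, ℂ)) (y : E3) :
    fourierInt ψ ((-(2 * π)) • y) = 𝓕⁻ ψ y := by
  rw [SchwartzMap.fourierInv_coe, Real.fourierInv_eq', fourierInt]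
  congr 1 with ξ
  rw [real_inner_smul_left, real_inner_comm, smul_eq_mul, mul_comm]
  congr 2
  push_cast
  ring

variable {φh φfun : ℝ → ℝ}

lemma integrable_norm_mul_sq_comp_norm
    (hint : IntegrableOn (fun r => r ^ 3 * φh r ^ 2) (Set.Ioi 0)) :
    Integrable fun ξ : E3 => ‖ξ‖ * ‖(φh ‖ξ‖ : ℂ)‖ ^ 2 := by
  rw [integrable_fun_norm_addHaar volume (f := fun r => r * ‖(φh r : ℂ)‖ ^ 2)]
  refine hint.congr_fun (fun r _ => ?_) measurableSet_Ioi
  simp only [finrank_euclideanSpace_fin, Nat.add_one_sub_one, Complex.norm_real, Real.norm_eq_abs,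
    sq_abs, smul_eq_mul]
  ring

lemma tendsto_fourier_indicator_ball_comp_norm (hmeas : Measurable φh)
    (hint : ∀ R, IntegrableOn (fun ξ : E3 => (φh ‖ξ‖ : ℂ)) (Metric.ball 0 R))
    (hφ : ∀ ρ : ℝ, 0 < ρ →
      Tendsto (fun R => (1 / (2 * π ^ 2 * ρ)) * ∫ r in (0 : ℝ)..R, r * φh r * Real.sin (ρ * r))
        atTop (𝓝 (φfun ρ))) {y : E3} (hy : y ≠ 0) :
    Tendsto (fun n : ℕ => 𝓕 ((Metric.ball 0 (n : ℝ)).indicator fun ξ : E3 => (φh ‖ξ‖ : ℂ)) y)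
      atTop (𝓝 ((2 * π) ^ 3 * φfun (2 * π * ‖y‖))) := by
  have hρ : 0 < 2 * π * ‖y‖ := mul_pos two_pi_pos (norm_pos_iff.2 hy)
  have hlim := ((hφ _ hρ).comp tendsto_natCast_atTop_atTop).ofReal.const_mul ((2 * π : ℂ) ^ 3)
  refine hlim.congr fun n => ?_
  have hφhm : StronglyMeasurable fun r => (φh r : ℂ) := Measurable.stronglyMeasurable (by fun_prop)
  rw [fourier_indicator_ball_comp_norm_of_finrank_eq_three (by simp) hφhm n.cast_nonneg (hint n) hy,
    Function.comp_apply]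
  have hy' : (‖y‖ : ℂ) ≠ 0 := by simpa
  have hπ : (π : ℂ) ≠ 0 := by simp [Real.pi_ne_zero]
  simp only [Complex.real_smul]
  push_cast [← intervalIntegral.integral_ofReal]
  field_simp
  simp only [mul_right_comm]

end ThreeSpace

theorem stmt13_general (φh : ℝ → ℝ) (hmeas : Measurable φh)
    (hint : IntegrableOn (fun r => r ^ 3 * φh r ^ 2) (Set.Ioi 0)) (φfun : ℝ → ℝ)
    (hφ : ∀ ρ : ℝ, 0 < ρ →
      Tendsto (fun R => (1 / (2 * π ^ 2 * ρ)) * ∫ r in (0 : ℝ)..R, r * φh r * Real.sin (ρ * r))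
        atTop (𝓝 (φfun ρ)))
    (ψ : SchwartzMap E3 ℂ) :
    Integrable (fun ξ : E3 => (φh ‖ξ‖ : ℂ) * ψ ξ) volume ∧
    Integrable (fun x : E3 => (φfun ‖x‖ : ℂ) * fourierInt ψ x) volume ∧
    (∫ ξ : E3, (φh ‖ξ‖ : ℂ) * ψ ξ) = ∫ x : E3, (φfun ‖x‖ : ℂ) * fourierInt ψ x := by
  have hdim : 1 < Module.finrank ℝ E3 := by simp
  have hf : AEStronglyMeasurable (fun ξ : E3 => (φh ‖ξ‖ : ℂ)) :=
    Measurable.aestronglyMeasurable (by fun_prop)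
  have hweight := integrable_norm_mul_sq_comp_norm hint
  have hball := integrableOn_ball_of_integrable_norm_mul_sq hdim hf hweight
  have hlim := (Measure.ae_ne volume (0 : E3)).mono fun y hy =>
    tendsto_fourier_indicator_ball_comp_norm hmeas hball hφ hy
  obtain ⟨hφψ, hdilate, heq⟩ := integral_fourier_smul_eq_of_tendsto_fourier_indicator_ball
    hdim hf hweight hlim (𝓕⁻ ψ)
  let G : E3 → ℂ := fun x => (φfun ‖x‖ : ℂ) * fourierInt ψ x
  have hG (y : E3) : 𝓕⁻ ψ y • ((2 * π) ^ 3 * φfun (2 * π * ‖y‖) : ℂ) =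
      (2 * π : ℝ) ^ 3 • G ((-(2 * π)) • y) := by
    simp only [G, fourierInt_neg_two_pi_smul, norm_smul, norm_neg,
      Real.norm_of_nonneg two_pi_pos.le, Complex.real_smul, smul_eq_mul]
    push_cast
    ring
  simp only [hG, FourierTransform.fourier_fourierInv_eq] at hφψ hdilate heq
  simp only [smul_eq_mul, mul_comm (ψ _)] at hφψ heq
  refine ⟨hφψ, ?_, ?_⟩
  · rw [← integrable_comp_smul_iff volume G (neg_ne_zero.2 two_pi_pos.ne')]
    exact (integrable_fun_smul_iff (by positivity : (2 * π) ^ 3 ≠ 0) _).1 hdilate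
  · rw [heq, integral_smul, Measure.integral_comp_smul, finrank_euclideanSpace_fin,
      abs_inv, abs_pow, abs_neg, abs_of_pos two_pi_pos, smul_inv_smul₀ (by positivity)]

/-- If `φ̂` is Borel measurable with `∫₀^∞ r³ φ̂(r)² dr = 1/(2π)`,
`r ↦ r φ̂(r)` is monotone on `(r₀, ∞)` for some `r₀ ≥ 0`, and
`φ(ρ) = lim_{R→∞} (1/(2π²ρ)) ∫₀^R r φ̂(r) sin(ρr) dr` for `ρ > 0`, then for every Schwartz
function `ψ` on `ℝ³`, the functions `ξ ↦ φ̂(|ξ|)ψ(ξ)` and `x ↦ φ(|x|)ψ̂(x)` are integrable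
and `∫ φ̂(|ξ|)ψ(ξ) dξ = ∫ φ(|x|)ψ̂(x) dx`. -/
theorem stmt13 (φh : ℝ → ℝ) (hmeas : Measurable φh)
    (hnorm : ∫ r in Set.Ioi (0 : ℝ), r ^ 3 * (φh r) ^ 2 = 1 / (2 * π))
    (r₀ : ℝ) (hr₀ : 0 ≤ r₀)
    (hmono : MonotoneOn (fun r => r * φh r) (Set.Ioi r₀) ∨
      AntitoneOn (fun r => r * φh r) (Set.Ioi r₀))
    (φfun : ℝ → ℝ)
    (hφ : ∀ ρ : ℝ, 0 < ρ →
      Tendsto (fun R => (1 / (2 * π ^ 2 * ρ)) * ∫ r in (0 : ℝ)..R, r * φh r * Real.sin (ρ * r))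
        atTop (𝓝 (φfun ρ)))
    (ψ : SchwartzMap E3 ℂ) :
    Integrable (fun ξ : E3 => (φh ‖ξ‖ : ℂ) * ψ ξ) volume ∧
    Integrable (fun x : E3 => (φfun ‖x‖ : ℂ) * fourierInt ψ x) volume ∧
    (∫ ξ : E3, (φh ‖ξ‖ : ℂ) * ψ ξ) = ∫ x : E3, (φfun ‖x‖ : ℂ) * fourierInt ψ x := by
  have hint : IntegrableOn (fun r => r ^ 3 * φh r ^ 2) (Set.Ioi 0) :=
    Integrable.of_integral_ne_zero (by rw [hnorm]; positivity)
  exact stmt13_general φh hmeas hint φfun hφ ψ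

end
end

section
/- For all real numbers a, b ≥ 0 and all p with 1 < p < ∞, |a log a − b log b| ≤ (p/(e(p−1))) |a−b|^{1/p} + |a−b| · log⁺(|a−b|) + 2 √(min(a,b)) · √(|a−b|), where 0 log 0 is interpreted as 0 and log⁺ x = max(log x, 0) for x > 0 with log⁺ 0 = 0. -/
/-!
For `a, b ≥ 0` the defect `(a + b) log (a + b) - a log a - b log b` lies between `0` and `2 √a √b`,
because `log (1 + x) ≤ √x`. Hence replacing `a log a - b log b` by `h log h`, where `h = |a - b|`,
costs at most `2 √(min a b) √h`. Finally `|log h| = log⁺ h + log⁺ h⁻¹`, and the second summand is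
controlled by `log⁺ x ≤ x ^ ε / (e ε)` at `x = h⁻¹` and `ε = 1 - s`, with `s = 1 / p`.
-/

open Real

lemma one_add_sq_le_exp {s : ℝ} (hs : 0 ≤ s) : 1 + s ^ 2 ≤ exp s := by
  have taylor : 1 + s + s ^ 2 / 2 + s ^ 3 / 6 ≤ exp s := by
    simpa [Finset.sum_range_succ, Nat.factorial] using sum_le_exp_of_nonneg hs 4
  calc 1 + s ^ 2 ≤ 1 + s ^ 2 + s * ((s - 3 / 2) ^ 2 + 15 / 4) / 6 :=
        le_add_of_nonneg_right (by positivity)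
    _ = 1 + s + s ^ 2 / 2 + s ^ 3 / 6 := by ring
    _ ≤ exp s := taylor

lemma log_one_add_le_sqrt {x : ℝ} (hx : 0 ≤ x) : log (1 + x) ≤ √x := by
  rw [log_le_iff_le_exp (by positivity)]
  simpa only [sq_sqrt hx] using one_add_sq_le_exp (sqrt_nonneg x)

lemma posLog_le_rpow_div_exp_one_mul {x ε : ℝ} (hx : 0 ≤ x) (hε : 0 < ε) :
    log⁺ x ≤ x ^ ε / (exp 1 * ε) := by
  refine max_le (by positivity) ?_
  rcases hx.eq_or_lt with rfl | hx
  · simpa only [log_zero] using by positivity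
  rw [le_div_iff₀' (by positivity)]
  calc exp 1 * ε * log x = exp 1 * (log x * ε) := by ring
    _ ≤ exp (log x * ε) := exp_one_mul_le_exp
    _ = x ^ ε := (rpow_def_of_pos hx ε).symm

lemma mul_posLog_inv_le_rpow_div {x s : ℝ} (hx : 0 ≤ x) (hs : s < 1) :
    x * log⁺ x⁻¹ ≤ x ^ s / (exp 1 * (1 - s)) := by
  have hs' : 0 < 1 - s := sub_pos.2 hs
  rcases hx.eq_or_lt with rfl | hx
  · simpa only [zero_mul] using by positivity
  calc x * log⁺ x⁻¹ ≤ x * (x⁻¹ ^ (1 - s) / (exp 1 * (1 - s))) := by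
        gcongr
        exact posLog_le_rpow_div_exp_one_mul (inv_nonneg.2 hx.le) hs'
    _ = x ^ s / (exp 1 * (1 - s)) := by
        rw [inv_rpow hx.le, ← rpow_neg hx.le, mul_div_assoc', neg_sub, rpow_sub_one hx.ne',
          mul_div_cancel₀ _ hx.ne']

lemma abs_log_eq_posLog_add_posLog_inv (x : ℝ) : |log x| = log⁺ x + log⁺ x⁻¹ := by
  linarith [posLog_sub_posLog_inv (x := x), half_mul_log_add_log_abs (x := x)]

lemma mul_abs_log_le_rpow_div_add_mul_posLog {x s : ℝ} (hx : 0 ≤ x) (hs : s < 1) :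
    x * |log x| ≤ x ^ s / (exp 1 * (1 - s)) + x * log⁺ x := by
  rw [abs_log_eq_posLog_add_posLog_inv, mul_add, add_comm]
  gcongr
  exact mul_posLog_inv_le_rpow_div hx hs

section

variable {a b : ℝ}

lemma mul_log_le_mul_log_add (ha : 0 ≤ a) (hb : 0 ≤ b) : a * log a ≤ a * log (a + b) := by
  rcases ha.eq_or_lt with rfl | ha
  · simp only [zero_mul, le_refl]
  · gcongr
    exact le_add_of_nonneg_right hb

lemma mul_log_add_le_mul_log_add_sqrt_mul_sqrt (ha : 0 ≤ a) (hb : 0 ≤ b) :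
    a * log (a + b) ≤ a * log a + √a * √b := by
  rcases ha.eq_or_lt with rfl | ha
  · simp
  calc a * log (a + b) = a * log a + a * log (1 + b / a) := by
        rw [← mul_add, ← log_mul ha.ne' (by positivity), mul_one_add, mul_div_cancel₀ b ha.ne']
    _ ≤ a * log a + a * √(b / a) := by gcongr; exact log_one_add_le_sqrt (by positivity)
    _ = a * log a + √a * √b := by
        rw [sqrt_div hb, mul_div_left_comm, div_sqrt, mul_comm √b]

lemma add_mul_log_add_sub_mem_Icc (ha : 0 ≤ a) (hb : 0 ≤ b) :
    (a + b) * log (a + b) - (a * log a + b * log b) ∈ Set.Icc 0 (2 * √a * √b) := by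
  have lower_a := mul_log_le_mul_log_add ha hb
  have lower_b := mul_log_le_mul_log_add hb ha
  have upper_a := mul_log_add_le_mul_log_add_sqrt_mul_sqrt ha hb
  have upper_b := mul_log_add_le_mul_log_add_sqrt_mul_sqrt hb ha
  rw [add_comm b a] at lower_b upper_b
  constructor <;> linarith

lemma abs_mul_log_sub_mul_log_le (ha : 0 ≤ a) (hb : 0 ≤ b) :
    |a * log a - b * log b| ≤ |a - b| * |log (a - b)| + 2 * √(min a b) * √|a - b| := by
  wlog hba : b ≤ a generalizing a b
  · rw [abs_sub_comm, abs_sub_comm a b, min_comm, ← neg_sub b a, log_neg_eq_log]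
    exact this hb ha (le_of_not_ge hba)
  have hab : 0 ≤ a - b := sub_nonneg.2 hba
  obtain ⟨defect_nonneg, defect_le⟩ := add_mul_log_add_sub_mem_Icc hb hab
  rw [add_sub_cancel] at defect_nonneg defect_le
  rw [min_eq_right hba, ← abs_mul, abs_of_nonneg hab]
  calc |a * log a - b * log b|
      = |(a - b) * log (a - b) + (a * log a - (b * log b + (a - b) * log (a - b)))| := by
        congr 1; ring
    _ ≤ |(a - b) * log (a - b)| + |a * log a - (b * log b + (a - b) * log (a - b))| :=
        abs_add_le _ _
    _ ≤ |(a - b) * log (a - b)| + 2 * √b * √(a - b) := by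
        rw [abs_of_nonneg defect_nonneg]; gcongr

theorem stmt15_general {s : ℝ} (ha : 0 ≤ a) (hb : 0 ≤ b) (hs : s < 1) :
    |a * log a - b * log b| ≤
      1 / (exp 1 * (1 - s)) * |a - b| ^ s + |a - b| * max (log |a - b|) 0 +
        2 * √(min a b) * √|a - b| := by
  have mul_abs_log_le : |a - b| * |log (a - b)| ≤
      1 / (exp 1 * (1 - s)) * |a - b| ^ s + |a - b| * max (log |a - b|) 0 := by
    rw [one_div_mul_eq_div, max_comm, ← posLog_apply, ← log_abs (a - b)]
    exact mul_abs_log_le_rpow_div_add_mul_posLog (abs_nonneg _) hs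
  exact (abs_mul_log_sub_mul_log_le ha hb).trans (by gcongr)

end

/-- For all `a, b ≥ 0` and `1 < p < ∞`,
`|a log a − b log b| ≤ (p/(e(p−1))) |a−b|^{1/p} + |a−b| log⁺|a−b| + 2√(min a b)√|a−b|`,
with the conventions `0 log 0 = 0` and `log⁺ x = max(log x, 0)`. -/
theorem stmt15 (a b p : ℝ) (ha : 0 ≤ a) (hb : 0 ≤ b) (hp : 1 < p) :
    |a * Real.log a - b * Real.log b| ≤
      (p / (Real.exp 1 * (p - 1))) * |a - b| ^ (1 / p) +
        |a - b| * max (Real.log |a - b|) 0 +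
        2 * Real.sqrt (min a b) * Real.sqrt |a - b| := by
  have coefficient_eq : p / (exp 1 * (p - 1)) = 1 / (exp 1 * (1 - 1 / p)) := by field_simp
  simpa only [coefficient_eq] using stmt15_general ha hb ((div_lt_one (by positivity)).2 hp)
end
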